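/- arXiv:1412.8187 — 4 statements merged into one kernel-verified Lean document; each statement's English description precedes it below -/
import Mathlib

section
/- If a finite group G acts freely and continuously on an even-dimensional sphere S^{2k} (k ≥ 0), then the order of G divides 2; that is, G is trivial or cyclic of order 2. -/
/-!
If `g ≠ 1`, the map `f = ρ g` has no fixed point, so the segment from `f x` to `-x` avoids the
origin and, after normalization, gives a homotopy from `f` to the antipodal map `a`
(`homotopic_antipodal`). If `g`, `h` and `g * h` were all nontrivial, then
`a ≃ ρ (g * h) = ρ g ∘ ρ h ≃ a ∘ a = id`. On an even-dimensional sphere this is impossible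
(`antipodal_not_homotopic_id`), so `g * h = 1` for all nontrivial `g` and `h`. Hence all nontrivial
elements are equal, and `G` has at most two elements.

That the antipodal map of the unit sphere of `ℝᵐ`, `m` odd, is not homotopic to the identity is
proved with Stokes' theorem, without homology or degree. A homotopy extends radially to a
norm-preserving homotopy of `ℝᵐ` from `x ↦ x` to `x ↦ -x`, which is made smooth without changing
its ends. Pull back the form `φ dy₁ ∧ ⋯ ∧ dyₘ`, where `φ` is a bump function at the origin. Being of
top degree on `ℝᵐ`, this form is closed, and so is its pullback to `ℝ × ℝᵐ`. The pullback vanishes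
on the faces of `[0, 1] × [-1, 1]ᵐ` on which some `|xⱼ| = 1`, so its integrals over the faces
`t = 0` and `t = 1` agree (`integral_pullback_eq`). These integrals are `∫ φ` and
`(-1)ᵐ ∫ φ = -∫ φ`, whereas `∫ φ > 0` (`no_smooth_homotopy_id_neg`).
-/

/-- The group of self-homeomorphisms of a topological space,
with `(f * g) x = f (g x)`. -/
instance homeomorphGroup {X : Type*} [TopologicalSpace X] : Group (X ≃ₜ X) where
  mul f g := g.trans f
  one := Homeomorph.refl X
  inv := Homeomorph.symm
  mul_assoc _ _ _ := Homeomorph.ext fun _ => rfl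
  one_mul _ := Homeomorph.ext fun _ => rfl
  mul_one _ := Homeomorph.ext fun _ => rfl
  inv_mul_cancel f := Homeomorph.ext fun x => f.symm_apply_apply x

section

open MeasureTheory Set

/-- The standard volume form `dy₁ ∧ ⋯ ∧ dyₘ` on `ℝᵐ`: the determinant of the matrix whose rows are
the given vectors. -/
noncomputable def detForm (m : ℕ) :
    EuclideanSpace ℝ (Fin m) [⋀^Fin m]→L[ℝ] ℝ :=
  { Matrix.detRowAlternating.compLinearMap (WithLp.linearEquiv 2 ℝ (Fin m → ℝ)).toLinearMap with
    cont := by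
      change Continuous fun v : Fin m → EuclideanSpace ℝ (Fin m) =>
        Matrix.det (Matrix.of fun i j => v i j)
      exact Continuous.matrix_det (by fun_prop) }

lemma detForm_single (m : ℕ) :
    detForm m (fun i => WithLp.toLp 2 (Pi.single i 1)) = 1 := by
  change Matrix.det (Matrix.of fun i j => (Pi.single i (1 : ℝ) : Fin m → ℝ) j) = 1
  rw [← Matrix.det_one (n := Fin m) (R := ℝ)]
  congr 1
  ext i j
  simp [Matrix.one_apply, Pi.single_apply, eq_comm]

lemma alternating_eq_zero {m : ℕ} (η : EuclideanSpace ℝ (Fin m) [⋀^Fin (m + 1)]→L[ℝ] ℝ) :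
    η = 0 := by
  ext v
  refine η.toAlternatingMap.map_linearDependent v fun h => ?_
  have := h.fintype_card_le_finrank
  simp at this

/-- Homotopy invariance of `∫ f^*(φ dy₁ ∧ ⋯ ∧ dyₘ)`. Coordinate `0` of the domain is the time `t`,
the coordinates `j.succ` are the space variables, and `hside` makes the pulled-back form vanish
on the faces of the box other than `t = 0` and `t = 1`. -/
lemma integral_pullback_eq {m : ℕ} {φ : EuclideanSpace ℝ (Fin m) → ℝ} (hφ : ContDiff ℝ 1 φ)
    {f : (Fin (m + 1) → ℝ) → EuclideanSpace ℝ (Fin m)} (hf : ContDiff ℝ 2 f)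
    (hside : ∀ z : Fin (m + 1) → ℝ, (∃ j : Fin m, |z j.succ| = 1) → φ (f z) = 0) :
    ∫ x in Icc (fun _ : Fin m => (-1 : ℝ)) (fun _ => 1), φ (f (Fin.cons 1 x)) *
        detForm m (fun j => fderiv ℝ f (Fin.cons 1 x) (Pi.single j.succ 1)) =
      ∫ x in Icc (fun _ : Fin m => (-1 : ℝ)) (fun _ => 1), φ (f (Fin.cons 0 x)) *
        detForm m (fun j => fderiv ℝ f (Fin.cons 0 x) (Pi.single j.succ 1)) := by
  let ω : EuclideanSpace ℝ (Fin m) → EuclideanSpace ℝ (Fin m) [⋀^Fin m]→L[ℝ] ℝ :=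
    fun y => φ y • detForm m
  have hω : Differentiable ℝ ω := (hφ.differentiable one_ne_zero).smul_const _
  let η := fun z => (ω (f z)).compContinuousLinearMap (fderiv ℝ f z)
  have hη : Differentiable ℝ η := fun z =>
    ((hω _).comp z (hf.differentiable two_ne_zero z)).continuousAlternatingMapCompContinuousLinearMap
      ((hf.fderiv_right (m := 1) (by norm_num)).differentiable one_ne_zero z)
  have hd : ∀ z, extDeriv η z = 0 := fun z => by
    rw [extDeriv_pullback (r := 2) (hω _) hf.contDiffAt (by simp),
      alternating_eq_zero (extDeriv ω (f z))]
    rfl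
  let e : Fin (m + 1) → Fin (m + 1) → ℝ := fun i => Pi.single i 1
  -- The vector field of signed coefficients of `η`; its divergence is the coefficient of `dη`.
  let V : Fin (m + 1) → (Fin (m + 1) → ℝ) → ℝ := fun i z => (-1 : ℝ) ^ i.val • η z (i.removeNth e)
  have hVd : ∀ i, Differentiable ℝ (V i) := fun i => by
    have : Differentiable ℝ fun z => η z (i.removeNth e) := fun z =>
      ((hη z).hasFDerivAt.continuousAlternatingMap_apply_const _).differentiableAt
    exact this.const_smul ((-1 : ℝ) ^ i.val)
  have hdiv : ∀ z, ∑ i, fderiv ℝ (V i) z (Pi.single i 1) = 0 := fun z => by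
    have := extDeriv_apply (hη z) e
    rw [hd z] at this
    refine Eq.trans ?_ this.symm
    refine Finset.sum_congr rfl fun i _ => ?_
    have h1 : DifferentiableAt ℝ (fun z => η z (i.removeNth e)) z :=
      ((hη z).hasFDerivAt.continuousAlternatingMap_apply_const _).differentiableAt
    change fderiv ℝ ((-1 : ℝ) ^ i.val • fun z => η z (i.removeNth e)) z _ = _
    rw [fderiv_const_smul h1]
    simp [e]
  have key := integral_divergence_of_hasFDerivAt_off_countable'
    (Fin.cons 0 fun _ => -1 : Fin (m + 1) → ℝ) (fun _ => 1)
    (fun i => by refine Fin.cases ?_ (fun j => ?_) i <;> simp) V (fun i z => fderiv ℝ (V i) z)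
    ∅ countable_empty (fun i => (hVd i).continuous.continuousOn)
    (fun z _ i => (hVd i z).hasFDerivAt) (by simp [hdiv])
  simp only [hdiv, integral_zero] at key
  rw [Fin.sum_univ_succ] at key
  -- Only the faces of direction `0` contribute.
  have hzero : ∀ (j : Fin m) (c : ℝ), |c| = 1 → ∀ x : Fin m → ℝ,
      V j.succ (j.succ.insertNth c x) = 0 := by
    intro j c hc x
    have : φ (f (j.succ.insertNth c x)) = 0 := hside _ ⟨j, by simpa using hc⟩
    simp [V, η, ω, this]
  simp only [Fin.cons_succ, hzero _ 1 (by simp), hzero _ (-1) (by simp), integral_zero, sub_zero,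
    Finset.sum_const_zero, add_zero] at key
  have hV0 : ∀ z, V 0 z = φ (f z) *
      detForm m (fun j => fderiv ℝ f z (Pi.single j.succ 1)) := by
    intro z
    simp [V, η, ω, Fin.removeNth, e, Function.comp_def]
  simp only [hV0, Fin.insertNth_zero', Fin.cons_zero] at key
  have key' := sub_eq_zero.1 key.symm
  exact key'

/-- The smooth core: a smooth homotopy of `ℝᵐ`, `m` odd, from the identity to the negation must come
within distance `1 / 2` of the origin at a point with some space coordinate `±1`. -/
lemma no_smooth_homotopy_id_neg {m : ℕ} (hm : Odd m) {f : (Fin (m + 1) → ℝ) → EuclideanSpace ℝ (Fin m)}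
    (hf : ContDiff ℝ 2 f)
    (hside : ∀ z : Fin (m + 1) → ℝ, (∃ j : Fin m, |z j.succ| = 1) → 1 / 2 ≤ ‖f z‖)
    (h0 : ∀ x : Fin m → ℝ, f (Fin.cons 0 x) = WithLp.toLp 2 x)
    (h1 : ∀ x : Fin m → ℝ, f (Fin.cons 1 x) = -WithLp.toLp 2 x) : False := by
  let φ : ContDiffBump (0 : EuclideanSpace ℝ (Fin m)) := ⟨1 / 4, 1 / 2, by norm_num, by norm_num⟩
  have hφs : ∀ z : Fin (m + 1) → ℝ, (∃ j : Fin m, |z j.succ| = 1) → φ (f z) = 0 := fun z hz =>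
    φ.zero_of_le_dist (by rw [dist_zero_right]; exact hside z hz)
  -- At a time `t` where `f` is multiplication by `c`, the Jacobian determinant is `c ^ m`.
  have hder : ∀ (t c : ℝ), (∀ x : Fin m → ℝ, f (Fin.cons t x) = c • WithLp.toLp 2 x) →
      ∀ x, detForm m (fun j => fderiv ℝ f (Fin.cons t x) (Pi.single j.succ 1)) = c ^ m := by
    intro t c h x
    have hj : ∀ j : Fin m, fderiv ℝ f (Fin.cons t x) (Pi.single j.succ 1) =
        c • WithLp.toLp 2 (Pi.single j 1) := by
      intro j
      have h2 : HasDerivAt (fun s : ℝ => (Fin.cons t x : Fin (m + 1) → ℝ) + s • Pi.single j.succ 1)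
          (Pi.single j.succ 1) 0 := by
        simpa using ((hasDerivAt_id (0 : ℝ)).smul_const
          (Pi.single j.succ 1 : Fin (m + 1) → ℝ)).const_add (Fin.cons t x)
      have h3 := (hf.differentiable two_ne_zero (Fin.cons t x)).hasFDerivAt
      have h4 := HasFDerivAt.comp_hasDerivAt_of_eq (0 : ℝ) h3 h2 (by simp)
      have h5 : HasDerivAt (fun s : ℝ => c • WithLp.toLp 2 x + s • c • WithLp.toLp 2 (Pi.single j 1))
          (c • WithLp.toLp 2 (Pi.single j (1 : ℝ))) (0 : ℝ) := by
        simpa using ((hasDerivAt_id (0 : ℝ)).smul_const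
          (c • WithLp.toLp 2 (Pi.single j (1 : ℝ)))).const_add (c • WithLp.toLp 2 x)
      refine h4.unique (h5.congr_of_eventuallyEq (Filter.Eventually.of_forall fun s => ?_))
      have : (Fin.cons t x : Fin (m + 1) → ℝ) + s • Pi.single j.succ 1 =
          (Fin.cons t (x + s • Pi.single j 1 : Fin m → ℝ) : Fin (m + 1) → ℝ) := by
        ext i
        refine Fin.cases ?_ (fun i => ?_) i
        · simp
        · simp [Pi.single_apply]
      simp only [Function.comp_apply, this, h, WithLp.toLp_add, WithLp.toLp_smul, smul_add]
      rw [smul_comm]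
    simp only [hj]
    have := (detForm m).toMultilinearMap.map_smul_univ (fun _ => c)
      (fun j => WithLp.toLp 2 (Pi.single j (1 : ℝ)))
    refine this.trans ?_
    have h6 := detForm_single m
    simp only [Finset.prod_const, Finset.card_univ, Fintype.card_fin, smul_eq_mul]
    erw [h6, mul_one]
  have key := integral_pullback_eq φ.contDiff hf hφs
  simp only [hder 0 1 (by simpa using h0), hder 1 (-1) (by simpa using h1), h0, h1, φ.neg,
    hm.neg_one_pow, one_pow, mul_one, mul_neg, integral_neg] at key
  have hpos : 0 < ∫ x in Icc (fun _ : Fin m => (-1 : ℝ)) (fun _ => 1), φ (WithLp.toLp 2 x) := by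
    have hc : Continuous fun x : Fin m → ℝ => φ (WithLp.toLp 2 x) :=
      φ.continuous.comp (by fun_prop)
    rw [setIntegral_pos_iff_support_of_nonneg_ae (Filter.Eventually.of_forall fun x => φ.nonneg)
      (hc.integrableOn_Icc)]
    have ho : IsOpen (Function.support (fun x : Fin m → ℝ => φ (WithLp.toLp 2 x)) ∩
        univ.pi fun _ => Ioo (-1) 1) :=
      hc.isOpen_support.inter (isOpen_set_pi finite_univ fun _ _ => isOpen_Ioo)
    refine (ho.measure_pos volume ⟨0, ?_, by simp⟩).trans_le (measure_mono ?_)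
    · have : φ 0 = 1 := φ.one_of_mem_closedBall (by simp [φ.rIn_pos.le])
      simp [this]
    · exact inter_subset_inter_right _ fun x hx =>
        ⟨fun i => (hx i trivial).1.le, fun i => (hx i trivial).2.le⟩
  linarith

/-- The antipodal map of an even-dimensional sphere, that is of the unit sphere of `ℝᵐ` with `m` odd,
is not homotopic to the identity. -/
lemma antipodal_not_homotopic_id {m : ℕ} (hm : Odd m)
    {a : C(Metric.sphere (0 : EuclideanSpace ℝ (Fin m)) 1,
      Metric.sphere (0 : EuclideanSpace ℝ (Fin m)) 1)} (ha : ∀ x, a x = -x)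
    (h : (ContinuousMap.id _).Homotopic a) : False := by
  obtain ⟨H⟩ := h
  have : Nonempty (Fin m) := ⟨⟨0, hm.pos⟩⟩
  obtain ⟨p⟩ : Nonempty (Metric.sphere (0 : EuclideanSpace ℝ (Fin m)) 1) :=
    (NormedSpace.sphere_nonempty.2 zero_le_one).to_subtype
  classical
  -- The radial projection to the sphere, with a junk value at the origin.
  let r : EuclideanSpace ℝ (Fin m) → Metric.sphere (0 : EuclideanSpace ℝ (Fin m)) 1 := fun x =>
    if hx : x ≠ 0 then ⟨‖x‖⁻¹ • x, by simp [norm_smul, hx]⟩ else p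
  have hr : ∀ x, ‖x‖ • (r x : EuclideanSpace ℝ (Fin m)) = x := fun x => by
    by_cases hx : x = 0
    · simp [hx]
    · simp [r, hx, smul_smul]
  have hrc : ContinuousOn r {0}ᶜ := by
    rw [Topology.IsInducing.subtypeVal.continuousOn_iff]
    have : ContinuousOn (fun x : EuclideanSpace ℝ (Fin m) => ‖x‖⁻¹ • x) {0}ᶜ :=
      (continuous_norm.continuousOn.inv₀ (by simp)).smul continuousOn_id
    refine this.congr fun x hx => ?_
    have : x ≠ 0 := hx
    simp [r, this]
  let X : (Fin (m + 1) → ℝ) → EuclideanSpace ℝ (Fin m) := fun z => WithLp.toLp 2 (Fin.tail z)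
  have hX : Continuous X := by unfold X Fin.tail; fun_prop
  -- The radial extension of the homotopy. The time change `3 t - 1` makes it stationary near
  -- `t = 0` and `t = 1`, hence smooth there, so that smoothing can leave its ends unchanged.
  let G : (Fin (m + 1) → ℝ) → EuclideanSpace ℝ (Fin m) := fun z =>
    ‖X z‖ • (H.extend (3 * z 0 - 1) (r (X z)) : EuclideanSpace ℝ (Fin m))
  have hGn : ∀ z, ‖G z‖ = ‖X z‖ := fun z => by simp [G, norm_smul]
  have hG : Continuous G := by
    rw [continuous_iff_continuousAt]
    intro z
    by_cases hz : X z = 0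
    -- At the origin the projection `r` is discontinuous, but `‖G z‖ = ‖X z‖` tends to `0`.
    · have : G z = 0 := by simp [G, hz]
      rw [ContinuousAt, this, tendsto_zero_iff_norm_tendsto_zero]
      simp only [hGn]
      have := hX.norm.tendsto z
      rwa [hz, norm_zero] at this
    · have h1 : ContinuousAt (fun z => r (X z)) z :=
        ContinuousAt.comp (hrc.continuousAt (isOpen_compl_singleton.mem_nhds hz)) hX.continuousAt
      have h2 : ContinuousAt (fun z : Fin (m + 1) → ℝ => H.extend (3 * z 0 - 1)) z :=
        (H.extend.continuous.comp (by fun_prop : Continuous fun z : Fin (m + 1) → ℝ =>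
          3 * z 0 - 1)).continuousAt
      exact hX.norm.continuousAt.smul (continuous_subtype_val.continuousAt.comp (h2.eval h1))
  have hG0 : ∀ z, 3 * z 0 - 1 ≤ 0 → G z = X z := fun z hz => by
    simp [G, H.extend_apply_of_le_zero hz, hr]
  have hG1 : ∀ z, 1 ≤ 3 * z 0 - 1 → G z = -X z := fun z hz => by
    simp [G, H.extend_apply_of_one_le hz, hr, ha]
  have hXd : ContDiff ℝ (2 : ℕ∞) X := by
    unfold X Fin.tail; fun_prop
  have hU1 : IsOpen {z : Fin (m + 1) → ℝ | 3 * z 0 - 1 < 0} :=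
    isOpen_lt (by fun_prop) (by fun_prop)
  have hU2 : IsOpen {z : Fin (m + 1) → ℝ | 1 < 3 * z 0 - 1} :=
    isOpen_lt (by fun_prop) (by fun_prop)
  obtain ⟨f, hf, hfG, hfe, -⟩ := hG.exists_contDiff_approx_and_eqOn (ε := fun _ => 1 / 2) 2
    continuous_const (fun _ => by norm_num)
    (S := {z | z 0 = 0} ∪ {z | z 0 = 1})
    (U := {z | 3 * z 0 - 1 < 0} ∪ {z | 1 < 3 * z 0 - 1})
    ((isClosed_eq (by fun_prop) (by fun_prop)).union (isClosed_eq (by fun_prop) (by fun_prop)))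
    ((hU1.union hU2).mem_nhdsSet.2 (by
      rintro z (hz | hz)
      · left; simp only [mem_ofPred_eq] at hz ⊢; rw [hz]; norm_num
      · right; simp only [mem_ofPred_eq] at hz ⊢; rw [hz]; norm_num))
    (ContDiffOn.union_of_isOpen (hXd.contDiffOn.congr fun z hz => hG0 z (le_of_lt hz))
      (hXd.neg.contDiffOn.congr fun z hz => hG1 z (le_of_lt hz)) hU1 hU2)
  refine no_smooth_homotopy_id_neg hm (f := f) (by exact_mod_cast hf) ?_ ?_ ?_
  · rintro z ⟨j, hj⟩
    have h1 : 1 ≤ ‖X z‖ := by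
      rw [← hj]
      exact PiLp.norm_apply_le (X z) j
    have h2 := hfG z
    rw [dist_eq_norm, norm_sub_rev] at h2
    have h3 := norm_sub_norm_le (G z) (f z)
    rw [hGn] at h3
    linarith
  · intro x
    rw [hfe (by left; simp), hG0 _ (by simp)]
    simp [X]
  · intro x
    rw [hfe (by right; simp), hG1 _ (by norm_num)]
    simp [X]

/-- A fixed-point free self-map of a sphere is homotopic to the antipodal map `a`, by normalizing the
segments from `f x` to `-x`. -/
lemma homotopic_antipodal {E : Type*} [NormedAddCommGroup E] [NormedSpace ℝ E]
    (f a : C(Metric.sphere (0 : E) 1, Metric.sphere (0 : E) 1))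
    (ha : ∀ x, a x = -x) (hf : ∀ x, f x ≠ x) : f.Homotopic a := by
  let L : unitInterval × Metric.sphere (0 : E) 1 → E := fun q =>
    (1 - (q.1 : ℝ)) • (f q.2 : E) - (q.1 : ℝ) • (q.2 : E)
  have hL : Continuous L := by unfold L; fun_prop
  have hne : ∀ q, L q ≠ 0 := by
    rintro ⟨t, x⟩ h
    have h1 : (1 - (t : ℝ)) • (f x : E) = (t : ℝ) • (x : E) := sub_eq_zero.1 h
    have h2 := congrArg norm h1
    simp only [norm_smul, Real.norm_eq_abs, norm_eq_of_mem_sphere, mul_one,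
      abs_of_nonneg t.2.1, abs_of_nonneg (sub_nonneg.2 t.2.2)] at h2
    rw [h2] at h1
    -- Both `f x` and `x` have norm `1`, so `1 - t = t`, which gives `f x = x`.
    have ht : (t : ℝ) ≠ 0 := by linarith
    exact hf x (Subtype.ext (smul_right_injective E ht h1))
  refine ⟨⟨⟨fun q => ⟨‖L q‖⁻¹ • L q, ?_⟩, ?_⟩, ?_, ?_⟩⟩
  · simp [norm_smul, hne q]
  · exact ((hL.norm.inv₀ fun q => norm_ne_zero_iff.2 (hne q)).smul hL).subtype_mk _
  · intro x
    ext1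
    simp [L]
  · intro x
    ext1
    simp [L, ha]

end

/-- If a finite group acts freely and continuously on an even-dimensional sphere
`S^{2k}`, then its order divides 2. -/
theorem order_dvd_two_of_free_action_even_sphere (G : Type*) [Group G] [Finite G] (k : ℕ)
    (ρ : G →* (Metric.sphere (0 : EuclideanSpace ℝ (Fin (2 * k + 1))) 1 ≃ₜ
        Metric.sphere (0 : EuclideanSpace ℝ (Fin (2 * k + 1))) 1))
    (hfree : ∀ g : G, g ≠ 1 → ∀ x : Metric.sphere (0 : EuclideanSpace ℝ (Fin (2 * k + 1))) 1,
        ρ g x ≠ x) :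
    Nat.card G ∣ 2 := by
  let S := Metric.sphere (0 : EuclideanSpace ℝ (Fin (2 * k + 1))) 1
  let a : C(S, S) := ⟨fun x => -x, continuous_neg⟩
  let F : G → C(S, S) := fun g => (ρ g : C(S, S))
  have hF : ∀ g, g ≠ 1 → (F g).Homotopic a := fun g hg =>
    homotopic_antipodal _ _ (fun _ => rfl) (hfree g hg)
  have hmul : ∀ g h : G, g ≠ 1 → h ≠ 1 → g * h = 1 := by
    intro g h hg hh
    by_contra hgh
    have h1 : (F (g * h)).Homotopic (ContinuousMap.id S) := by
      have h2 : F (g * h) = (F g).comp (F h) := by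
        ext1 x
        change ρ (g * h) x = ρ g (ρ h x)
        rw [map_mul]
        rfl
      have h3 : a.comp a = ContinuousMap.id S := by
        ext1 x
        exact neg_neg x
      rw [h2, ← h3]
      exact (hF g hg).comp (hF h hh)
    exact antipodal_not_homotopic_id (a := a) ⟨k, rfl⟩ (fun _ => rfl) (h1.symm.trans (hF _ hgh))
  have hcard : Nat.card G ≤ 2 := by
    by_contra! hc
    have := Fintype.ofFinite G
    rw [Nat.card_eq_fintype_card, ← Finset.card_univ, Finset.two_lt_card] at hc
    obtain ⟨x, -, y, -, z, -, hxy, hxz, hyz⟩ := hc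
    have heq : ∀ g h : G, g ≠ 1 → h ≠ 1 → g = h := fun g h hg hh =>
      mul_right_cancel ((hmul g h hg hh).trans (hmul h h hh hh).symm)
    by_cases hx : x = 1
    · exact hyz (heq y z (fun h => hxy (hx.trans h.symm)) fun h => hxz (hx.trans h.symm))
    · by_cases hy : y = 1
      · exact hxz (heq x z hx fun h => hyz (hy.trans h.symm))
      · exact hxy (heq x y hx hy)
  have := Nat.card_pos (α := G)
  interval_cases Nat.card G <;> simp
end

section
/- Let G be a finite group. Then every subgroup of G of order p^2 is cyclic for every prime p if and only if, for every odd prime p, the Sylow p-subgroups of G are cyclic and the Sylow 2-subgroups of G are either cyclic or generalized quaternion (i.e., isomorphic to the generalized quaternion group of order 4m for some m ≥ 2). -/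
/-!
Let `P` be a nontrivial finite `p`-group whose subgroups of order `p ^ 2` are cyclic. A central
element `z` of order `p` generates the only subgroup of order `p`: an element `x` of order `p`
outside `⟨z⟩` would give a subgroup `⟨z⟩ × ⟨x⟩` of order `p ^ 2`, which is not cyclic.

The structure of `P` is read off from a normal cyclic subgroup `A = ⟨a⟩` containing `z` which is
maximal among such subgroups. The tool is `mem_zpowers_pow_of_geom_sum`. Suppose `x ∉ A`,
`x ^ p ∈ A`, `x` acts on `A` by `a ↦ a ^ k`, and `1 + k + ⋯ + k ^ (p - 1)` is `p` times a number
prime to `p`. If `x ^ p` were a `p`-th power in `A`, then some `a ^ i * x` would have trivial `p`-th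
power, although all elements of order `p` lie in `A`. Hence `x ^ p` generates `A`.

* With `k = 1` this shows that `A` is its own centralizer (`exists_normal_zpowers`): otherwise some
  `y ∉ A` centralizes `A`, is central modulo `A` and has `y ^ p ∈ A`, so that `⟨y⟩` is a strictly
  larger normal cyclic subgroup.
* For odd `p`, an element `x ∉ A` with `x ^ p ∈ A` acts with `k ≡ 1` modulo `p`, so the geometric sum
  is `p` modulo `p ^ 2`. Then `A ≤ ⟨x⟩`, so `x` centralizes `A`, a contradiction. Thus `P = A`.
* For `p = 2`, the same argument excludes `k ≡ 1` modulo `4`. In the remaining case a computation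
  in `A` shows that `x` inverts `a` and that `x ^ 2` is the involution of `A`
  (`conj_eq_inv_of_two`). Since `-1` is not a square modulo `4`, no such `x` is a square, so every
  element outside `A` inverts `A`; two of them differ by an element of the centralizer `A`, and `P`
  is generalized quaternion.

Conversely, a subgroup of order `p ^ 2` lies in a Sylow subgroup. Subgroups of cyclic groups are
cyclic, and a noncyclic subgroup of order `4` would have four solutions of `h ^ 2 = 1`, whereas a
generalized quaternion group has two.
-/

/-! ### Powers in an extension of a cyclic group -/

lemma mul_pow_of_conj {P : Type*} [Group P] {a x : P} {k : ℤ} (hk : x * a * x⁻¹ = a ^ k) (i : ℤ)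
    (m : ℕ) : (a ^ i * x) ^ m = a ^ (i * ∑ j ∈ Finset.range m, k ^ j) * x ^ m := by
  have hc : ∀ n : ℤ, x * a ^ n = a ^ (k * n) * x := fun n => by
    rw [zpow_mul, ← hk, conj_zpow, inv_mul_cancel_right]
  induction m with
  | zero => simp
  | succ m ih =>
    rw [pow_succ', ih, geom_sum_succ, mul_assoc, ← mul_assoc x, hc, mul_assoc, ← pow_succ',
      ← mul_assoc, ← zpow_add]
    congr 2
    ring

/-- If all solutions of `y ^ p = 1` lie in the cyclic `p`-group `⟨a⟩` and `x ∉ ⟨a⟩` has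
`x ^ p ∈ ⟨a⟩`, then `x ^ p` generates `⟨a⟩`, as soon as the norm `1 + k + ⋯ + k ^ (p - 1)` of the
action of `x` is `p` times a number prime to `p`: otherwise `x` could be multiplied by a power of
`a` so that its `p`-th power becomes trivial. -/
lemma mem_zpowers_pow_of_geom_sum {P : Type*} [Group P] {p n : ℕ} (hp : p.Prime) {a x : P}
    (ha : orderOf a = p ^ n) (hU : ∀ y : P, y ^ p = 1 → y ∈ Subgroup.zpowers a)
    (hx : x ∉ Subgroup.zpowers a) (hxp : x ^ p ∈ Subgroup.zpowers a) {k u : ℤ}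
    (hk : x * a * x⁻¹ = a ^ k) (hS : ∑ i ∈ Finset.range p, k ^ i = p * u)
    (hu : IsCoprime u p) : a ∈ Subgroup.zpowers (x ^ p) := by
  obtain ⟨r, hr⟩ := hxp
  have hr : a ^ r = x ^ p := hr
  by_cases hpr : (p : ℤ) ∣ r
  · exfalso
    obtain ⟨s, rfl⟩ := hpr
    obtain ⟨v, w, hvw⟩ := hu.pow_right (n := n)
    apply hx
    -- `v` inverts `u` modulo `p ^ n`, so the exponent `-s * v * (p * u)` cancels `p * s`
    have hy : a ^ (-s * v) * x ∈ Subgroup.zpowers a := by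
      apply hU
      rw [mul_pow_of_conj hk, ← hr, ← zpow_add, hS, ← orderOf_dvd_iff_zpow_eq_one, ha]
      refine ⟨p * s * w, ?_⟩
      push_cast
      linear_combination (-p * s) * hvw
    exact (Subgroup.mul_mem_cancel_left _ (Subgroup.zpow_mem_zpowers a _)).1 hy
  · have hcop : IsCoprime r ((p : ℤ) ^ n) :=
      (((Nat.prime_iff_prime_int.1 hp).coprime_iff_not_dvd).2 hpr).symm.pow_right
    obtain ⟨s, t, hst⟩ := hcop
    refine ⟨s, ?_⟩
    have h1 : a ^ ((p : ℤ) ^ n) = 1 := by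
      rw [← orderOf_dvd_iff_zpow_eq_one, ha]; push_cast; rfl
    change (x ^ p) ^ s = a
    rw [← hr, ← zpow_mul]
    calc a ^ (r * s) = a ^ (r * s) * (a ^ ((p : ℤ) ^ n)) ^ t := by rw [h1]; simp
      _ = a ^ (s * r + t * (p : ℤ) ^ n) := by
        rw [← zpow_mul, ← zpow_add]; congr 1; ring
      _ = a := by rw [hst, zpow_one]

/-! ### The unique subgroup of order `p` and a self-centralizing cyclic normal subgroup -/

/-- A nontrivial normal subgroup of a finite `p`-group contains a central element of order `p`. -/
lemma exists_mem_center_orderOf {Q : Type*} [Group Q] [Finite Q] {p : ℕ} [Fact p.Prime]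
    (hQ : IsPGroup p Q) (N : Subgroup Q) [N.Normal] (hN : N ≠ ⊥) :
    ∃ b ∈ N, orderOf b = p ∧ ∀ g, g * b = b * g := by
  have hd : p ∣ Nat.card N :=
    (hQ.to_subgroup N).card_eq_or_dvd.resolve_left fun h => hN (Subgroup.card_eq_one.1 h)
  obtain ⟨c, hc, hc1⟩ := (hQ.of_equiv ConjAct.toConjAct).exists_fixed_point_of_prime_dvd_card_of_fixed_point
    N hd (a := 1) (fun g => smul_one g)
  have hcc : (c : Q) ∈ Subgroup.center Q := by
    rw [Subgroup.mem_center_iff]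
    intro g
    have := congrArg (fun t : N => (t : Q)) (hc (ConjAct.toConjAct g))
    simp only [ConjAct.Subgroup.val_conj_smul, ConjAct.toConjAct_smul] at this
    exact mul_inv_eq_iff_eq_mul.1 this
  have hM : N ⊓ Subgroup.center Q ≠ ⊥ := fun h => hc1 (by
    have : (c : Q) ∈ N ⊓ Subgroup.center Q := ⟨c.2, hcc⟩
    rw [h, Subgroup.mem_bot] at this
    exact Subtype.ext this.symm)
  have hd : p ∣ Nat.card (N ⊓ Subgroup.center Q : Subgroup Q) :=
    (hQ.to_subgroup _).card_eq_or_dvd.resolve_left fun h => hM (Subgroup.card_eq_one.1 h)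
  obtain ⟨b, hb⟩ := exists_prime_orderOf_dvd_card' p hd
  exact ⟨b, b.2.1, by rw [Subgroup.orderOf_coe, hb], Subgroup.mem_center_iff.1 b.2.2⟩

/-- A central subgroup of order `p` contains every solution of `x ^ p = 1`, since it would otherwise
span a noncyclic group of order `p ^ 2` together with `x`. -/
lemma mem_zpowers_of_pow_eq_one {P : Type*} [Group P] [Finite P] {p : ℕ} (hp : p.Prime)
    (h : ∀ H : Subgroup P, Nat.card H = p ^ 2 → IsCyclic H) {z : P} (hz : orderOf z = p)
    (hzc : ∀ g, g * z = z * g) {x : P} (hx : x ^ p = 1) : x ∈ Subgroup.zpowers z := by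
  have := Fact.mk hp
  by_contra hxz
  have hxo : orderOf x = p := orderOf_eq_prime hx fun h1 => hxz (h1 ▸ one_mem _)
  have hcomm : ∀ (m : Subgroup.zpowers z) (n : Subgroup.zpowers x),
      Commute ((Subgroup.zpowers z).subtype m) ((Subgroup.zpowers x).subtype n) := by
    rintro ⟨_, i, rfl⟩ ⟨_, j, rfl⟩
    exact Commute.zpow_zpow (hzc x).symm i j
  let f := MonoidHom.noncommCoprod _ _ hcomm
  have hf : Function.Injective f := by
    rw [MonoidHom.noncommCoprod_injective]
    refine ⟨Subtype.val_injective, Subtype.val_injective, ?_⟩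
    rw [Subgroup.range_subtype, Subgroup.range_subtype]
    have hdis : Subgroup.zpowers z ⊓ Subgroup.zpowers x = ⊥ := by
      by_contra hne
      have hle : Subgroup.zpowers z ⊓ Subgroup.zpowers x = Subgroup.zpowers x := by
        apply Subgroup.eq_of_le_of_card_ge inf_le_right
        rw [Nat.card_zpowers, hxo]
        have hd : Nat.card (Subgroup.zpowers z ⊓ Subgroup.zpowers x : Subgroup P) ∣ p := by
          conv_rhs => rw [← hxo, ← Nat.card_zpowers]
          exact Subgroup.card_dvd_of_le inf_le_right
        rcases (Nat.dvd_prime hp).1 hd with h1 | h1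
        · exact absurd (Subgroup.card_eq_one.1 h1) hne
        · exact h1.ge
      exact hxz ((hle.ge.trans inf_le_left) (Subgroup.mem_zpowers x))
    exact disjoint_iff.2 hdis
  have hcyc : IsCyclic f.range := by
    apply h
    rw [← Nat.card_congr (MonoidHom.ofInjective hf).toEquiv, Nat.card_prod, Nat.card_zpowers,
      Nat.card_zpowers, hz, hxo, sq]
  have hcyc' := isCyclic_of_injective (MonoidHom.ofInjective hf).toMonoidHom
    (MonoidHom.ofInjective hf).injective
  have := coprime_card_of_isCyclic_prod (Subgroup.zpowers z) (Subgroup.zpowers x)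
  rw [Nat.card_zpowers, Nat.card_zpowers, hz, hxo, Nat.coprime_self] at this
  exact hp.one_lt.ne' this

/-- A normal cyclic subgroup, maximal among those containing a fixed central element of order `p`,
contains all elements of order `p` and its own centralizer. -/
lemma exists_normal_zpowers {P : Type*} [Group P] [Finite P] [Nontrivial P] {p : ℕ}
    (hp : p.Prime) (hP : IsPGroup p P)
    (h : ∀ H : Subgroup P, Nat.card H = p ^ 2 → IsCyclic H) :
    ∃ a : P, (Subgroup.zpowers a).Normal ∧ (∀ y : P, y ^ p = 1 → y ∈ Subgroup.zpowers a) ∧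
      ∀ x : P, Commute x a → x ∈ Subgroup.zpowers a := by
  have := Fact.mk hp
  obtain ⟨z, -, hz, hzc⟩ := exists_mem_center_orderOf hP (⊤ : Subgroup P) top_ne_bot
  have hzn : (Subgroup.zpowers z).Normal := by
    constructor
    rintro _ ⟨n, rfl⟩ g
    refine ⟨n, ?_⟩
    change z ^ n = g * z ^ n * g⁻¹
    rw [← conj_zpow, hzc, mul_inv_cancel_right]
  obtain ⟨a, ⟨han, haz⟩, hmax⟩ := Set.Finite.exists_maximalFor (fun a : P => Subgroup.zpowers a)
    {a : P | (Subgroup.zpowers a).Normal ∧ z ∈ Subgroup.zpowers a} (Set.toFinite _)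
    ⟨z, hzn, Subgroup.mem_zpowers z⟩
  have hU : ∀ y : P, y ^ p = 1 → y ∈ Subgroup.zpowers a := fun y hy =>
    (Subgroup.zpowers_le.2 haz) (mem_zpowers_of_pow_eq_one hp h hz hzc hy)
  refine ⟨a, han, hU, ?_⟩
  by_contra! hcon
  obtain ⟨x, hxa, hx⟩ := hcon
  -- the image in `P ⧸ ⟨a⟩` of the centralizer of `⟨a⟩` is a nontrivial normal subgroup, so it
  -- contains a central element of order `p`
  let C := Subgroup.centralizer (Subgroup.zpowers a : Set P)
  have hxC : x ∈ C := by
    rw [Subgroup.mem_centralizer_iff]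
    rintro _ ⟨n, rfl⟩
    exact (hxa.zpow_right n).symm
  let π := QuotientGroup.mk' (Subgroup.zpowers a)
  have hCn : (C.map π).Normal :=
    Subgroup.Normal.map inferInstance π (QuotientGroup.mk'_surjective _)
  have hCb : C.map π ≠ ⊥ := fun hb => hx (by
    have : π x ∈ C.map π := Subgroup.mem_map_of_mem π hxC
    rw [hb, Subgroup.mem_bot] at this
    exact (QuotientGroup.eq_one_iff x).1 this)
  obtain ⟨_, ⟨y, hyC, rfl⟩, hyo, hyc⟩ :=
    exists_mem_center_orderOf (hP.to_quotient (Subgroup.zpowers a)) (C.map π) hCb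
  have hyA : y ∉ Subgroup.zpowers a := fun hy => by
    rw [show π y = 1 from (QuotientGroup.eq_one_iff y).2 hy, orderOf_one] at hyo
    exact hp.one_lt.ne hyo
  have hypA : y ^ p ∈ Subgroup.zpowers a := by
    rw [← QuotientGroup.eq_one_iff (N := Subgroup.zpowers a)]
    have := pow_orderOf_eq_one (π y)
    rwa [hyo, ← map_pow] at this
  have hya : y * a * y⁻¹ = a ^ (1 : ℤ) := by
    rw [← Subgroup.mem_centralizer_iff.1 hyC a (Subgroup.mem_zpowers a), zpow_one,
      mul_inv_cancel_right]
  obtain ⟨n, hn⟩ := IsPGroup.iff_orderOf.1 hP a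
  have hay : a ∈ Subgroup.zpowers y := by
    have := mem_zpowers_pow_of_geom_sum hp hn hU hyA hypA (u := 1) hya (by simp) isCoprime_one_left
    exact Subgroup.zpowers_le.2 (Subgroup.npow_mem_zpowers y p) this
  have hle : Subgroup.zpowers a ≤ Subgroup.zpowers y := Subgroup.zpowers_le.2 hay
  have hyn : (Subgroup.zpowers y).Normal := by
    have hconj : ∀ g : P, g * y * g⁻¹ ∈ Subgroup.zpowers y := fun g => by
      have h1 : y⁻¹ * (g * y * g⁻¹) ∈ Subgroup.zpowers a := by
        rw [← QuotientGroup.eq_one_iff (N := Subgroup.zpowers a)]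
        change π (y⁻¹ * (g * y * g⁻¹)) = 1
        rw [map_mul, map_mul, map_mul, hyc (π g), map_inv, map_inv, mul_inv_cancel_right,
          inv_mul_cancel]
      exact (Subgroup.mul_mem_cancel_left _ (inv_mem (Subgroup.mem_zpowers y))).1 (hle h1)
    constructor
    rintro _ ⟨m, rfl⟩ g
    change g * y ^ m * g⁻¹ ∈ _
    rw [← conj_zpow]
    exact zpow_mem (hconj g) m
  exact hyA (hmax ⟨hyn, hle haz⟩ hle (Subgroup.mem_zpowers y))

lemma exists_pow_notMem {P : Type*} [Group P] [Finite P] {p : ℕ} [Fact p.Prime]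
    (hP : IsPGroup p P) (A : Subgroup P) {y : P} (hy : y ∉ A) :
    ∃ j : ℕ, y ^ p ^ j ∉ A ∧ (y ^ p ^ j) ^ p ∈ A := by
  obtain ⟨n, hn⟩ := hP y
  have hex : ∃ j, y ^ p ^ j ∈ A := ⟨n, hn ▸ one_mem A⟩
  classical
  obtain ⟨j, hj⟩ : ∃ j, Nat.find hex = j + 1 := by
    refine Nat.exists_eq_succ_of_ne_zero fun h0 => hy ?_
    have := Nat.find_spec hex
    rwa [h0, pow_zero, pow_one] at this
  refine ⟨j, Nat.find_min hex (by omega), ?_⟩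
  rw [← pow_mul, ← pow_succ, ← hj]
  exact Nat.find_spec hex

lemma exists_conj_eq_zpow {P : Type*} [Group P] {a : P} (ha : (Subgroup.zpowers a).Normal) (x : P) :
    ∃ k : ℤ, x * a * x⁻¹ = a ^ k := by
  obtain ⟨k, hk⟩ := ha.conj_mem a (Subgroup.mem_zpowers a) x
  exact ⟨k, hk.symm⟩

lemma geom_sum_eq_mul {p : ℕ} (hodd : Odd p) {k : ℤ} (hk : (p : ℤ) ∣ k - 1) :
    ∃ u : ℤ, ∑ i ∈ Finset.range p, k ^ i = p * u ∧ IsCoprime u p := by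
  obtain ⟨b, hb⟩ := hk
  obtain ⟨c, hc⟩ := odd_sq_dvd_geom_sum₂_sub (1 : ℤ) b hodd
  rw [← hb] at hc
  simp only [one_pow, mul_one, add_sub_cancel] at hc
  refine ⟨1 + p * c, by linear_combination hc, 1, -c, by ring⟩

lemma conj_pow_eq {P : Type*} [Group P] {a x : P} {k : ℤ} (hk : x * a * x⁻¹ = a ^ k) (m : ℕ) :
    x ^ m * a * (x ^ m)⁻¹ = a ^ (k ^ m) := by
  induction m with
  | zero => simp
  | succ m ih =>
    rw [pow_succ', pow_succ', zpow_mul, ← hk, conj_zpow, ← ih]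
    group

/-! ### Odd primes -/

theorem isCyclic_of_odd {P : Type*} [Group P] [Finite P] {p : ℕ}
    (hp : p.Prime) (hodd : Odd p) (hP : IsPGroup p P)
    (h : ∀ H : Subgroup P, Nat.card H = p ^ 2 → IsCyclic H) : IsCyclic P := by
  rcases subsingleton_or_nontrivial P with _ | _
  · infer_instance
  have := Fact.mk hp
  obtain ⟨a, han, hU, hC⟩ := exists_normal_zpowers hp hP h
  refine ⟨a, fun y => ?_⟩
  by_contra hy
  obtain ⟨j, hx, hxp⟩ := exists_pow_notMem hP (Subgroup.zpowers a) hy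
  set x := y ^ p ^ j
  obtain ⟨k, hk⟩ := exists_conj_eq_zpow han x
  obtain ⟨n, hn⟩ := IsPGroup.iff_orderOf.1 hP a
  -- `x ^ p` centralizes `a`, so `k ^ p ≡ 1` modulo `p`, and `k ^ p ≡ k` by Fermat
  have hdiv : (p : ℤ) ∣ k - 1 := by
    have hn0 : n ≠ 0 := by
      rintro rfl
      rw [pow_zero, orderOf_eq_one_iff] at hn
      exact hx (hC x (hn ▸ Commute.one_right x))
    have h1 : a ^ (k ^ p) = a := by
      rw [← conj_pow_eq hk]
      obtain ⟨r, hr⟩ := hxp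
      have hr : a ^ r = x ^ p := hr
      rw [← hr]
      group
    have h2 : (p : ℤ) ∣ k ^ p - 1 := by
      refine dvd_trans (dvd_pow_self _ hn0) (?_ : (p : ℤ) ^ n ∣ _)
      rw [← Nat.cast_pow, ← hn, orderOf_dvd_iff_zpow_eq_one, zpow_sub, h1, zpow_one, mul_inv_cancel]
    rw [← ZMod.intCast_zmod_eq_zero_iff_dvd] at h2 ⊢
    push_cast at h2 ⊢
    rwa [ZMod.pow_card] at h2
  obtain ⟨u, hS, hu⟩ := geom_sum_eq_mul hodd hdiv
  obtain ⟨s, hs⟩ := mem_zpowers_pow_of_geom_sum hp hn hU hx hxp hk hS hu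
  apply hx
  apply hC
  rw [← hs]
  exact ((Commute.refl x).pow_right p).zpow_right s


/-! ### The prime two -/

/-- An element `x` of order two modulo a self-centralizing normal cyclic `2`-group `⟨a⟩` that
contains all involutions inverts `a`, and `x ^ 2` is the involution of `⟨a⟩`. -/
lemma conj_eq_inv_of_two {P : Type*} [Group P] {a x : P} {n : ℕ} (hn : orderOf a = 2 ^ n)
    (han : (Subgroup.zpowers a).Normal) (hU : ∀ y : P, y ^ 2 = 1 → y ∈ Subgroup.zpowers a)
    (hC : ∀ x : P, Commute x a → x ∈ Subgroup.zpowers a) (hx : x ∉ Subgroup.zpowers a)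
    (hxp : x ^ 2 ∈ Subgroup.zpowers a) :
    x * a * x⁻¹ = a⁻¹ ∧ ∃ m : ℕ, 2 ≤ m ∧ 2 ∣ m ∧ orderOf a = 2 * m ∧ x ^ 2 = a ^ m := by
  obtain ⟨k, hk⟩ := exists_conj_eq_zpow han x
  have hncomm : ¬ x * a * x⁻¹ = a := fun hc => hx (hC x (mul_inv_eq_iff_eq_mul.1 hc))
  obtain ⟨r, hr⟩ := id hxp
  have hr : a ^ r = x ^ 2 := hr
  have hnot : a ∉ Subgroup.zpowers (x ^ 2) := by
    rintro ⟨s, hs⟩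
    refine hx (hC x ?_)
    rw [← hs]
    exact ((Commute.refl x).pow_right 2).zpow_right s
  obtain ⟨l, rfl⟩ : ∃ l, n = l + 1 := by
    refine Nat.exists_eq_succ_of_ne_zero ?_
    rintro rfl
    rw [pow_zero, orderOf_eq_one_iff] at hn
    exact hx (hC x (hn ▸ Commute.one_right x))
  obtain ⟨l, rfl⟩ : ∃ i, l = i + 1 := by
    refine Nat.exists_eq_succ_of_ne_zero ?_
    rintro rfl
    -- if `a` has order two, its conjugate `a ^ k` is `1` or `a`
    rcases Int.even_or_odd' k with ⟨c, rfl | rfl⟩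
    · have h1 : a ^ (2 : ℤ) = 1 := by rw [← orderOf_dvd_iff_zpow_eq_one, hn]; norm_num
      rw [zpow_mul, h1, one_zpow, conj_eq_one_iff] at hk
      exact hncomm (by rw [hk]; simp)
    · have h1 : a ^ (2 : ℤ) = 1 := by rw [← orderOf_dvd_iff_zpow_eq_one, hn]; norm_num
      rw [zpow_add, zpow_mul, h1, one_zpow, one_mul, zpow_one] at hk
      exact hncomm hk
  set M : ℕ := 2 ^ (l + 1) with hM
  have ho : orderOf a = 2 * M := by rw [hn, pow_succ']
  have hdvd : ∀ i : ℤ, a ^ i = 1 ↔ (2 * M : ℤ) ∣ i := fun i => by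
    rw [← orderOf_dvd_iff_zpow_eq_one, ho]; push_cast; rfl
  have hM2 : 2 ∣ M := dvd_pow_self 2 (Nat.succ_ne_zero l)
  have hMz : (2 : ℤ) ∣ M := by exact_mod_cast hM2
  have h1 : (2 * M : ℤ) ∣ r * (k - 1) := by
    have : a ^ (r * k) = a ^ r := by
      rw [mul_comm, zpow_mul, ← hk, conj_zpow, hr]; group
    rw [← hdvd, mul_sub, mul_one, zpow_sub, this, mul_inv_cancel]
  have h2 : (2 * M : ℤ) ∣ (k + 1) * (k - 1) := by
    have h3 : a ^ (k ^ 2) = a := by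
      rw [← conj_pow_eq hk, ← hr]
      group
    rw [← hdvd, show (k + 1) * (k - 1) = k ^ 2 - 1 by ring, zpow_sub, h3, zpow_one, mul_inv_cancel]
  have hkodd : Odd k := by
    by_contra hke
    rw [Int.not_odd_iff_even] at hke
    have : Odd ((k + 1) * (k - 1)) := (hke.add_odd odd_one).mul (hke.sub_odd odd_one)
    exact Int.not_even_iff_odd.2 this (even_iff_two_dvd.2 ((Dvd.intro _ rfl).trans h2))
  -- `k ≡ 1` modulo `4` would make `1 + k` twice an odd number
  obtain ⟨e, he⟩ : ∃ e, k - 1 = 2 * (2 * e + 1) := by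
    obtain ⟨c, rfl⟩ := hkodd
    rcases Int.even_or_odd' c with ⟨d, rfl | rfl⟩
    · exact absurd (mem_zpowers_pow_of_geom_sum (u := 2 * d + 1) Nat.prime_two hn hU hx hxp hk
        (by simp [Finset.sum_range_succ]; ring) ⟨1, -d, by push_cast; ring⟩) hnot
    · exact ⟨d, by ring⟩
  have hcop : IsCoprime (M : ℤ) (2 * e + 1) := by
    rw [hM]; push_cast
    exact IsCoprime.pow_left ⟨-e, 1, by ring⟩
  have hred : ∀ t : ℤ, (2 * M : ℤ) ∣ t * (k - 1) → (M : ℤ) ∣ t := fun t ht => by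
    rw [he, mul_left_comm] at ht
    exact hcop.dvd_of_dvd_mul_right (Int.dvd_of_mul_dvd_mul_left two_ne_zero ht)
  -- a multiple of `M` is `0` or `M` modulo the order `2 * M` of `a`
  have hcase : ∀ t : ℤ, (M : ℤ) ∣ t → a ^ t = 1 ∨ a ^ t = a ^ M := by
    rintro t ⟨c, rfl⟩
    rcases Int.even_or_odd' c with ⟨d, rfl | rfl⟩
    · left; rw [hdvd]; exact ⟨d, by ring⟩
    · right
      rw [show (M : ℤ) * (2 * d + 1) = 2 * M * d + M by ring, zpow_add, (hdvd _).2 ⟨d, rfl⟩,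
        one_mul, zpow_natCast]
  have hxM : x ^ 2 = a ^ M := by
    rw [← hr]
    refine (hcase r (hred r h1)).resolve_left fun h => hx (hU x ?_)
    rw [← hr, h]
  -- if `a ^ (k + 1)` were the involution `a ^ M`, then `a * x` would square to `1`
  have hk1 : a ^ (k + 1) = 1 := by
    refine (hcase _ (hred _ h2)).resolve_right fun h => hx ?_
    have hy : a ^ (1 : ℤ) * x ∈ Subgroup.zpowers a := by
      apply hU
      rw [mul_pow_of_conj hk, hxM]
      simp only [Finset.sum_range_succ, Finset.sum_range_zero, zero_add, pow_zero, pow_one, one_mul]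
      rw [add_comm, h, ← pow_add, ← two_mul, ← ho, pow_orderOf_eq_one]
    exact (Subgroup.mul_mem_cancel_left _ (Subgroup.zpow_mem_zpowers a _)).1 hy
  refine ⟨?_, M, Nat.le_of_dvd (by positivity) hM2, hM2, ho, hxM⟩
  rw [hk, eq_inv_iff_mul_eq_one, ← zpow_add_one, hk1]

/-- A group generated by `a` and `x` subject to the generalized quaternion relations, with
`x ∉ ⟨a⟩`, `⟨a⟩` of index two and `a` of order exactly `2 * m`, is generalized quaternion. -/
lemma nonempty_equiv_quaternionGroup {P : Type*} [Group P] {a x : P} {m : ℕ} (hm : m ≠ 0)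
    (ha : orderOf a = 2 * m) (hx : x ∉ Subgroup.zpowers a) (hxa : x * a * x⁻¹ = a⁻¹)
    (hx2 : x ^ 2 = a ^ m) (hcov : ∀ y, y ∉ Subgroup.zpowers a → x⁻¹ * y ∈ Subgroup.zpowers a) :
    Nonempty (P ≃* QuaternionGroup m) := by
  have : NeZero m := ⟨hm⟩
  let φ : ZMod (2 * m) →+ Additive P := ZMod.lift (2 * m)
    ⟨zmultiplesHom (Additive P) (Additive.ofMul a), by
      rw [zmultiplesHom_apply, ← ofMul_zpow, zpow_natCast, ← ha, pow_orderOf_eq_one, ofMul_one]⟩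
  -- `e i` is `a ^ i`, for an exponent taken modulo the order of `a`
  let e : ZMod (2 * m) → P := fun i => (φ i).toMul
  have e_int : ∀ i : ℤ, e i = a ^ i := fun i => by
    simp only [e, φ, ZMod.lift_coe, zmultiplesHom_apply, ← ofMul_zpow, toMul_ofMul]
  have e_add : ∀ i j, e (i + j) = e i * e j := fun i j => by simp [e]
  have e_sub : ∀ i j, e (i - j) = e i * (e j)⁻¹ := fun i j => by simp [e, div_eq_mul_inv]
  have e_m : e m = x ^ 2 := by rw [hx2, ← zpow_natCast, ← e_int]; simp
  have e_mem : ∀ i, e i ∈ Subgroup.zpowers a := fun i => by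
    obtain ⟨i, rfl⟩ := ZMod.intCast_surjective i
    exact ⟨i, (e_int i).symm⟩
  have e_comm : ∀ i j, e i * e j = e j * e i := fun i j => by rw [← e_add, ← e_add, add_comm]
  have e_x : ∀ i, e i * x = x * (e i)⁻¹ := fun i => by
    obtain ⟨i, rfl⟩ := ZMod.intCast_surjective i
    have h := conj_zpow (a := x) (b := a) (i := -i)
    rw [hxa, inv_zpow', neg_neg, zpow_neg] at h
    rw [e_int]
    nth_rewrite 1 [h]
    rw [inv_mul_cancel_right]
  let f : QuaternionGroup m →* P := MonoidHom.mk'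
    (fun q => match q with
      | .a i => e i
      | .xa i => x * e i) (by
    rintro (i | i) (j | j)
    · simp only [QuaternionGroup.a_mul_a, e_add]
    · simp only [QuaternionGroup.a_mul_xa, e_sub]
      rw [← mul_assoc (e i), e_x, mul_assoc, (Commute.inv_right (e_comm j i)).eq]
    · simp only [QuaternionGroup.xa_mul_a, e_add, mul_assoc]
    · simp only [QuaternionGroup.xa_mul_xa, e_add, e_sub, e_m]
      rw [mul_assoc x, ← mul_assoc (e i), e_x, sq, mul_assoc, mul_assoc, mul_assoc,
        ← Commute.inv_right (e_comm j i)])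
  have fa : ∀ i, f (.a i) = e i := fun i => rfl
  have fxa : ∀ i, f (.xa i) = x * e i := fun i => rfl
  have hinj : Function.Injective f := by
    rw [injective_iff_map_eq_one]
    rintro (i | i) h
    · rw [fa] at h
      obtain ⟨i, rfl⟩ := ZMod.intCast_surjective i
      rw [e_int, ← orderOf_dvd_iff_zpow_eq_one, ha, ← ZMod.intCast_zmod_eq_zero_iff_dvd] at h
      rw [h, QuaternionGroup.a_zero]
    · rw [fxa, mul_eq_one_iff_eq_inv] at h
      exact absurd (h ▸ inv_mem (e_mem i)) hx
  have hsurj : Function.Surjective f := by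
    intro y
    by_cases hy : y ∈ Subgroup.zpowers a
    · obtain ⟨i, rfl⟩ := hy
      exact ⟨.a i, e_int i⟩
    · obtain ⟨i, hi⟩ := hcov y hy
      refine ⟨.xa i, ?_⟩
      rw [fxa, e_int]
      exact (eq_inv_mul_iff_mul_eq.1 hi)
  exact ⟨(MulEquiv.ofBijective f ⟨hinj, hsurj⟩).symm⟩

theorem isCyclic_or_quaternion_of_two {P : Type*} [Group P] [Finite P] (hP : IsPGroup 2 P)
    (h : ∀ H : Subgroup P, Nat.card H = 2 ^ 2 → IsCyclic H) :
    IsCyclic P ∨ ∃ m : ℕ, 2 ≤ m ∧ Nonempty (P ≃* QuaternionGroup m) := by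
  rcases subsingleton_or_nontrivial P with _ | _
  · left; infer_instance
  obtain ⟨a, han, hU, hC⟩ := exists_normal_zpowers Nat.prime_two hP h
  obtain ⟨n, hn⟩ := IsPGroup.iff_orderOf.1 hP a
  by_cases hall : ∀ y, y ∈ Subgroup.zpowers a
  · exact Or.inl ⟨a, hall⟩
  right
  have hinv : ∀ y, y ∉ Subgroup.zpowers a → y ^ 2 ∈ Subgroup.zpowers a := by
    intro y hy
    obtain ⟨j, hx, hxp⟩ := exists_pow_notMem hP (Subgroup.zpowers a) hy
    rcases j with _ | j
    · simpa using hxp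
    exfalso
    -- otherwise inversion on `zpowers a` would be the square of an automorphism
    obtain ⟨h1, m, -, ⟨m', rfl⟩, ho, -⟩ := conj_eq_inv_of_two hn han hU hC hx hxp
    rw [pow_succ, pow_mul] at h1
    obtain ⟨k, hk⟩ := exists_conj_eq_zpow han (y ^ 2 ^ j)
    rw [conj_pow_eq hk, eq_inv_iff_mul_eq_one, ← zpow_add_one, ← orderOf_dvd_iff_zpow_eq_one,
      ho] at h1
    have h4 : (4 : ℤ) ∣ k ^ 2 + 1 := dvd_trans ⟨m', by push_cast; ring⟩ h1
    rcases Int.even_or_odd' k with ⟨c, rfl | rfl⟩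
    · ring_nf at h4; omega
    · ring_nf at h4; omega
  push Not at hall
  obtain ⟨x, hx⟩ := hall
  obtain ⟨hxa, m, hm, -, ho, hx2⟩ := conj_eq_inv_of_two hn han hU hC hx (hinv x hx)
  refine ⟨m, hm, nonempty_equiv_quaternionGroup (by omega) ho hx hxa hx2 fun y hy => hC _ ?_⟩
  have hya := (conj_eq_inv_of_two hn han hU hC hy (hinv y hy)).1
  -- `x` and `y` both invert `a`, so `x⁻¹ * y` centralizes it
  apply mul_inv_eq_iff_eq_mul.1
  have h3 : x⁻¹ * a⁻¹ * x = a := by rw [← hxa]; group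
  rw [show x⁻¹ * y * a * (x⁻¹ * y)⁻¹ = x⁻¹ * (y * a * y⁻¹) * x by group, hya, h3]

/-! ### The converse -/

lemma isCyclic_of_subgroup_quaternionGroup {m : ℕ} (hm : m ≠ 0)
    (H : Subgroup (QuaternionGroup m)) (hH : Nat.card H = 2 ^ 2) : IsCyclic H := by
  have : NeZero m := ⟨hm⟩
  by_contra hc
  rw [not_isCyclic_iff_exponent_eq_prime Nat.prime_two hH] at hc
  have hcast : (m : ZMod (2 * m)) ≠ 0 := by
    rw [Ne, ZMod.natCast_eq_zero_iff]
    exact fun hd => by have := Nat.le_of_dvd (by omega) hd; omega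
  -- `a 0` and `a m` are the only solutions of `h ^ 2 = 1`
  have hsub : (H : Set (QuaternionGroup m)) ⊆ {.a 0, .a m} := by
    intro h hh
    have h2 : h ^ 2 = 1 := by
      have := Monoid.pow_exponent_eq_one (⟨h, hh⟩ : H)
      rw [hc] at this
      exact congrArg Subtype.val this
    rcases h with i | i
    · rw [sq, QuaternionGroup.a_mul_a, QuaternionGroup.one_def, QuaternionGroup.a.injEq] at h2
      obtain ⟨i, rfl⟩ := ZMod.intCast_surjective i
      rw [← Int.cast_add, ZMod.intCast_zmod_eq_zero_iff_dvd] at h2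
      obtain ⟨c, hc⟩ := h2
      have hi : i = m * c := by push_cast at hc; linarith
      rcases Int.even_or_odd' c with ⟨d, rfl | rfl⟩
      · left
        rw [QuaternionGroup.a.injEq, ZMod.intCast_zmod_eq_zero_iff_dvd]
        exact ⟨d, by push_cast; rw [hi]; ring⟩
      · right
        rw [Set.mem_singleton_iff, QuaternionGroup.a.injEq, ← sub_eq_zero, ← Int.cast_natCast (R := ZMod (2 * m)) m,
          ← Int.cast_sub, ZMod.intCast_zmod_eq_zero_iff_dvd]
        exact ⟨d, by push_cast; rw [hi]; ring⟩
    · rw [QuaternionGroup.xa_sq, QuaternionGroup.one_def, QuaternionGroup.a.injEq] at h2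
      exact absurd h2 hcast
  have h1 := Set.ncard_le_ncard hsub (Set.toFinite _)
  have h2 := Set.ncard_insert_le (QuaternionGroup.a 0 : QuaternionGroup m) {.a m}
  rw [Set.ncard_singleton] at h2
  change Nat.card H ≤ _ at h1
  omega


/-- A finite group satisfies the `p²`-condition for all primes `p` (every subgroup of
order `p²` is cyclic) if and only if its Sylow `p`-subgroups are cyclic for every odd
prime `p`, and its Sylow `2`-subgroups are cyclic or generalized quaternion. -/
theorem p_squared_conditions_iff_sylow (G : Type*) [Group G] [Finite G] :
    (∀ p : ℕ, p.Prime → ∀ H : Subgroup G, Nat.card H = p ^ 2 → IsCyclic H) ↔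
      ((∀ p : ℕ, p.Prime → Odd p → ∀ P : Sylow p G, IsCyclic P) ∧
        (∀ P : Sylow 2 G, IsCyclic P ∨ ∃ m : ℕ, 2 ≤ m ∧ Nonempty (P ≃* QuaternionGroup m))) := by
  constructor
  · intro h
    have hsub : ∀ (p : ℕ), p.Prime → ∀ (P : Subgroup G) (H : Subgroup P),
        Nat.card H = p ^ 2 → IsCyclic H := fun p hp P H hH => by
      have e := H.equivMapOfInjective P.subtype P.subtype_injective
      have := h p hp (H.map P.subtype) (by rw [← Nat.card_congr e.toEquiv, hH])
      exact isCyclic_of_injective e.toMonoidHom e.injective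
    exact ⟨fun p hp hodd P => isCyclic_of_odd hp hodd P.isPGroup' (hsub p hp P),
      fun P => isCyclic_or_quaternion_of_two P.isPGroup' (hsub 2 Nat.prime_two P)⟩
  · rintro ⟨hodd, htwo⟩ p hp H hH
    have := Fact.mk hp
    obtain ⟨P, hHP⟩ := (IsPGroup.of_card hH).exists_le_sylow
    have hcyc : IsCyclic P → IsCyclic H := fun _ =>
      isCyclic_of_injective (Subgroup.inclusion hHP) (Subgroup.inclusion_injective hHP)
    rcases hp.eq_two_or_odd' with rfl | hpo
    · rcases htwo P with hc | ⟨m, hm, ⟨e⟩⟩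
      · exact hcyc hc
      let f : H →* QuaternionGroup m := e.toMonoidHom.comp (Subgroup.inclusion hHP)
      have hf : Function.Injective f := e.injective.comp (Subgroup.inclusion_injective hHP)
      have e' := MonoidHom.ofInjective hf
      have := isCyclic_of_subgroup_quaternionGroup (by omega) f.range
        (by rw [← Nat.card_congr e'.toEquiv, hH])
      exact isCyclic_of_injective e'.toMonoidHom e'.injective
    · exact hcyc (hodd p hp hpo P)
end

section
/- Let G be a finite group admitting a free orthogonal action on a sphere; that is, there exists n ≥ 1 and a group homomorphism ρ from G to the orthogonal group O(n) of ℝ^n such that for every g ≠ 1 in G, the linear map ρ(g) fixes no nonzero vector of ℝ^n. Then for all primes p and q (not necessarily distinct), every subgroup of G of order pq is cyclic. -/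
/-!
For a nontrivial subgroup `K` of `G` and any vector `v`, the vector `∑ x ∈ K, ρ x v` is fixed
by `K`, hence is zero; so `∑ x ∈ K, ρ x = 0` (`sum_subgroup_eq_zero`), that is, the nontrivial
elements of `K` sum to `-1` in the matrix ring.

Suppose `H` has order `p * q` and is not cyclic. Then all nontrivial elements of `H` have prime
order, so `H \ {1}` is partitioned into the sets `K \ {1}`, where `K` runs over the, say `m`,
subgroups of prime order. Summing `ρ` over this partition gives `-1 = -m`, so `m = 1` and
`H = K` is cyclic after all (`isCyclic_of_sum_eq_zero`). The cases `p = q` and `p ≠ q` are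
treated uniformly.
-/

/-- A fixed-point free representation `f` sums to zero over any nontrivial subgroup, since the
image of the sum consists of vectors fixed by the subgroup. -/
lemma sum_subgroup_eq_zero {G : Type*} [Group G] {n : ℕ}
    (f : G →* Matrix (Fin n) (Fin n) ℝ)
    (hfree : ∀ g : G, g ≠ 1 → ∀ v : Fin n → ℝ, v ≠ 0 → Matrix.mulVec (f g) v ≠ v)
    (K : Subgroup G) [Fintype K] (g : G) (hg : g ≠ 1) (hgK : g ∈ K) :
    ∑ x : K, f x = 0 := by
  have h : f g * ∑ x : K, f x = ∑ x : K, f x := by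
    rw [Finset.mul_sum]
    exact Fintype.sum_equiv (Equiv.mulLeft (⟨g, hgK⟩ : K)) _ _ (fun x => by simp)
  apply Matrix.mulVec_injective
  funext v
  by_contra hv
  rw [Matrix.zero_mulVec] at hv
  exact hfree g hg _ hv (by rw [Matrix.mulVec_mulVec, h])

/-- If all nontrivial elements of a nontrivial finite group have prime order and a representation
sums to zero over every nontrivial subgroup, then there is only one subgroup of prime order, so
that the group is cyclic. -/
lemma isCyclic_of_sum_eq_zero {H R : Type*} [Group H] [Finite H] [Nontrivial H]
    [Ring R] [CharZero R] (f : H →* R)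
    (hf : ∀ (K : Subgroup H) [Fintype K], ∀ g ∈ K, g ≠ 1 → ∑ x : K, f x = 0)
    (hprime : ∀ g : H, g ≠ 1 → (orderOf g).Prime) : IsCyclic H := by
  classical
  have := Fintype.ofFinite H
  have hsub (K : Subgroup H) (g : H) (hgK : g ∈ K) (hg : g ≠ 1) :
      ∑ x ∈ Finset.univ.filter (fun x => x ≠ 1 ∧ x ∈ K), f x = -1 := by
    have h1 : ∑ x ∈ Finset.univ.filter (fun x => x ∈ K), f x = 0 := by
      rw [← hf K g hgK hg]
      exact Finset.sum_subtype _ (by simp) _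
    have h2 : Finset.univ.filter (fun x => x ∈ K)
        = insert 1 (Finset.univ.filter (fun x => x ≠ 1 ∧ x ∈ K)) := by
      ext x
      by_cases hx : x = 1
      · simp [hx, K.one_mem]
      · simp [hx]
    rw [h2, Finset.sum_insert (by simp), map_one] at h1
    exact (neg_eq_of_add_eq_zero_right h1).symm
  have hz {g x : H} (hg : g ≠ 1) (hx : x ≠ 1) (hxg : x ∈ Subgroup.zpowers g) :
      Subgroup.zpowers x = Subgroup.zpowers g := by
    apply Subgroup.eq_of_le_of_card_ge (Subgroup.zpowers_le.2 hxg)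
    have hd : orderOf x ∣ orderOf g := orderOf_dvd_of_mem_zpowers hxg
    rw [Nat.card_zpowers, Nat.card_zpowers,
      (Nat.prime_dvd_prime_iff_eq (hprime x hx) (hprime g hg)).1 hd]
  set S : Finset H := Finset.univ.filter (fun x => x ≠ 1) with hS
  set T : Finset (Subgroup H) := S.image Subgroup.zpowers with hT
  obtain ⟨a, ha⟩ := exists_ne (1 : H)
  have hsum : ∑ x ∈ S, f x = -1 := by
    rw [← hsub ⊤ a trivial ha]
    simp [hS]
  have hfib : ∑ K ∈ T, ∑ x ∈ S with Subgroup.zpowers x = K, f x = ∑ x ∈ S, f x :=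
    Finset.sum_fiberwise_of_maps_to (fun x hx => Finset.mem_image_of_mem _ hx) _
  have hconst : ∀ K ∈ T, ∑ x ∈ S with Subgroup.zpowers x = K, f x = -1 := by
    intro K hK
    obtain ⟨g, hg, rfl⟩ := Finset.mem_image.1 hK
    have hg1 : g ≠ 1 := by simpa [hS] using hg
    rw [← hsub _ g (Subgroup.mem_zpowers g) hg1]
    congr 1
    ext x
    simp only [hS, Finset.mem_filter, Finset.mem_univ, true_and]
    exact and_congr_right fun hx =>
      ⟨fun h => h ▸ Subgroup.mem_zpowers x, fun h => hz hg1 hx h⟩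
  rw [Finset.sum_congr rfl hconst, hsum, Finset.sum_const, nsmul_eq_mul, mul_neg, mul_one,
    neg_inj, Nat.cast_eq_one] at hfib
  obtain ⟨K, hK⟩ := Finset.card_eq_one.1 hfib
  have key (x : H) (hx : x ≠ 1) : Subgroup.zpowers x = K := by
    have : Subgroup.zpowers x ∈ T := Finset.mem_image_of_mem _ (by simpa [hS] using hx)
    simpa [hK] using this
  refine ⟨a, fun x => ?_⟩
  change x ∈ Subgroup.zpowers a
  by_cases hx : x = 1
  · exact hx ▸ Subgroup.one_mem _
  · rw [key a ha, ← key x hx]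
    exact Subgroup.mem_zpowers x


/-- Zassenhaus: if a finite group admits a free orthogonal action on a sphere, i.e. a
fixed-point free real orthogonal representation, then every subgroup of order `pq`
(`p`, `q` primes, not necessarily distinct) is cyclic. -/
theorem pq_condition_of_free_orthogonal_action (G : Type*) [Group G] [Finite G]
    (n : ℕ) (hn : 1 ≤ n) (ρ : G →* Matrix.orthogonalGroup (Fin n) ℝ)
    (hfree : ∀ g : G, g ≠ 1 → ∀ v : Fin n → ℝ, v ≠ 0 →
      Matrix.mulVec (ρ g : Matrix (Fin n) (Fin n) ℝ) v ≠ v)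
    (p q : ℕ) (hp : p.Prime) (hq : q.Prime)
    (H : Subgroup G) (hH : Nat.card H = p * q) : IsCyclic H := by
  have : NeZero n := ⟨by omega⟩
  let f : H →* Matrix (Fin n) (Fin n) ℝ :=
    ((Matrix.orthogonalGroup (Fin n) ℝ).subtype.comp ρ).comp H.subtype
  have hf : ∀ g : H, g ≠ 1 → ∀ v : Fin n → ℝ, v ≠ 0 → Matrix.mulVec (f g) v ≠ v :=
    fun g hg => hfree g (by simpa using hg)
  have : Nontrivial H := by
    rw [← Finite.one_lt_card_iff_nontrivial, hH]
    exact Nat.one_lt_mul_iff.2 ⟨hp.pos, hq.pos, Or.inl hp.one_lt⟩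
  have : CharZero (Matrix (Fin n) (Fin n) ℝ) :=
    charZero_of_injective_algebraMap (algebraMap ℝ (Matrix (Fin n) (Fin n) ℝ)).injective
  by_contra hcyc
  refine hcyc (isCyclic_of_sum_eq_zero f
    (fun K _ g hgK hg => sum_subgroup_eq_zero f hf K g hg hgK) fun g hg => ?_)
  have hd : orderOf g ∣ p * q := hH ▸ orderOf_dvd_natCard g
  have hne : orderOf g ≠ p * q := fun h => hcyc (isCyclic_of_orderOf_eq_card g (h.trans hH.symm))
  obtain ⟨a, b, ha, hb, hab⟩ := Nat.dvd_mul.1 hd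
  have ho : orderOf g ≠ 1 := by simpa using hg
  rcases (Nat.dvd_prime hp).1 ha with rfl | rfl <;> rcases (Nat.dvd_prime hq).1 hb with rfl | rfl
  · exact absurd hab.symm (by simpa using ho)
  · rwa [← hab, one_mul]
  · rwa [← hab, mul_one]
  · exact absurd hab.symm hne
end

section
/- Let G be a nontrivial finite group with periodic cohomology, and call an integer n > 0 a period of G if the group cohomology H^n(G; ℤ) with trivial coefficients is cyclic of order |G|. Then the set of periods of G is nonempty, its minimal element is even, and every period of G is a multiple of the minimal period. -/
/-!
Write `N = |G|`. If `m` is a period, then a generator `u` of `H^m(G; ℤ)` is killed only by the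
multiples of `N`. Such a class makes the cohomology of `G` and of all its subgroups periodic; the
proof uses dimension shifting in place of cup products and Tate cohomology.

Embed a lattice `A` in the module of functions `G → A`, and let `cosyzygy A` be the quotient. The
functions form a module on which the identity is an average `∑ g⁻¹ φ g`, so its positive cohomology
vanishes, also after restriction to a subgroup and after dualising. Iterating `m` times from the
trivial module gives a lattice `B = syz m` with `H^i(H; B) ≅ H^{i+m}(H; ℤ)` for `i > 0` and every
subgroup `H`, and dually `H^{i+m}(G; B*) ≅ H^i(G; ℤ)` (`syz_res`, `syz_dual`).

The class `u` comes from an invariant `b ∈ B` through the connecting map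
`H^0(B) → H^1(syz (m - 1)) ≅ H^m(ℤ)`, which kills the norms `∑ g x`; so `t b` is a norm only if
`N ∣ t`. A duality argument on lattices (`exists_invariant_dual`, Tate duality in degree zero) then
gives an invariant functional `h` on `B` with `h b ≡ 1` modulo `N`. The maps `1 ↦ b` and `h` between
`ℤ` and `B` compose to multiplication by an integer congruent to `1` modulo `N`, which is the
identity on positive cohomology. Hence `H^i(H; ℤ)` embeds in `H^{i+m}(H; ℤ)`, and using `B*`
instead, `H^{i+m}(G; ℤ)` embeds in `H^i(G; ℤ)`, for all `i > 0` (`exists_injective_add`,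
`exists_injective_sub`).

The coefficients are a general principal ideal domain `k` until the end.

* If `d` is the minimal period and `n > d` is a period, both embeddings with `m = d`, `i = n - d`
  and finiteness show that `n - d` is a period; so `d ∣ n` by induction.
* If `d` were odd, take `H ≠ 1` a cyclic subgroup: `H^2(H; ℤ) ≅ ℤ/|H|` would embed in
  `H^{2+d}(H; ℤ) = 0`.
-/

/-- `n` is a period of the finite group `G` if `n > 0` and the group cohomology
`H^n(G; ℤ)` with trivial coefficients is cyclic of order `|G|`. -/
def IsCohomologyPeriod (G : Type) [Group G] (n : ℕ) : Prop :=
  0 < n ∧ Nonempty ((groupCohomology (Rep.trivial ℤ G ℤ) n) ≃+ ZMod (Nat.card G))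

namespace PeriodicCohomology

open CategoryTheory

/-! ### Averages and vanishing of cohomology -/

variable {k : Type} [CommRing k]

theorem rep_hom_ext {G : Type} [Group G] {A B : Rep.{0} k G} {f g : A ⟶ B}
    (h : ∀ a, f.hom a = g.hom a) : f = g :=
  Rep.hom_ext (Representation.IntertwiningMap.ext (LinearMap.ext h))

section Averaging
variable {G : Type} [Group G] [Fintype G]

/-- `T` is the average `∑ g⁻¹ φ g` of the `k`-linear, not necessarily equivariant, endomorphism `φ`
of `A`. -/
def IsAverage (A : Rep.{0} k G) (φ : A.V →ₗ[k] A.V) (T : A.V → A.V) : Prop :=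
  ∀ a, ∑ g : G, A.ρ g⁻¹ (φ (A.ρ g a)) = T a

/-- The morphism `a ↦ (h ↦ φ (h a))` from `A` to the module coinduced from the trivial subgroup. With
`ofCoind` it factors the average of `φ`. -/
noncomputable def toCoind (A : Rep.{0} k G) (φ : A.V →ₗ[k] A.V) :
    A ⟶ Rep.coind (⊥ : Subgroup G).subtype (Rep.res (⊥ : Subgroup G).subtype A) :=
  Rep.ofHom
    { toFun := fun a => ⟨fun h => φ (A.ρ h a), by
        rintro ⟨g, hg⟩ h
        obtain rfl := Subgroup.mem_bot.1 hg
        simp⟩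
      map_add' := fun a b => by ext; simp
      map_smul' := fun c a => by ext; simp
      isIntertwining' := fun g => by
        ext a h
        change φ (A.ρ h (A.ρ g a)) = φ (A.ρ (h * g) a)
        rw [map_mul, Module.End.mul_apply] }

/-- The morphism `f ↦ ∑ h⁻¹ f(h)` to `A` from the module coinduced from the trivial subgroup. -/
noncomputable def ofCoind (A : Rep.{0} k G) :
    Rep.coind (⊥ : Subgroup G).subtype (Rep.res (⊥ : Subgroup G).subtype A) ⟶ A :=
  Rep.ofHom
    { toFun := fun f => ∑ h : G, A.ρ h⁻¹ (f.1 h)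
      map_add' := fun a b => by simp [Finset.sum_add_distrib]
      map_smul' := fun c a => by simp [Finset.smul_sum]
      isIntertwining' := fun g => by
        ext f
        simp only [LinearMap.comp_apply, LinearMap.coe_mk, AddHom.coe_mk, map_sum]
        refine Fintype.sum_equiv (Equiv.mulRight g) _ _ fun h => ?_
        rw [← Module.End.mul_apply, ← map_mul]
        change A.ρ h⁻¹ (f.1 (h * g)) = _
        simp }

/-- An average factors through a coinduced module, whose positive cohomology vanishes by Shapiro's
lemma. -/
theorem map_eq_zero_of_average (A : Rep.{0} k G) (φ : A.V →ₗ[k] A.V) (T : A ⟶ A)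
    (hT : IsAverage A φ T.hom) (n : ℕ) :
    (groupCohomology.functor k G (n + 1)).map T = 0 := by
  have h : T = toCoind A φ ≫ ofCoind A :=
    rep_hom_ext (fun a => (hT a).symm)
  have hz := (isZero_groupCohomology_succ_of_subsingleton
    (Rep.res (⊥ : Subgroup G).subtype A) n).of_iso (groupCohomology.coindIso _ (n + 1))
  rw [h, Functor.map_comp]
  exact (hz.eq_of_tgt ((groupCohomology.functor k G (n + 1)).map (toCoind A φ)) 0) ▸ Limits.zero_comp

/-- The identity of `A` is an average (Higman's criterion for relative projectivity over the trivial
subgroup). -/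
def IsWeaklyProjective (A : Rep.{0} k G) : Prop := ∃ φ, IsAverage A φ _root_.id

theorem IsWeaklyProjective.isZero {A : Rep.{0} k G} (h : IsWeaklyProjective A) (n : ℕ) :
    Limits.IsZero (groupCohomology A (n + 1)) := by
  obtain ⟨φ, hφ⟩ := h
  have := map_eq_zero_of_average A φ (𝟙 A) hφ n
  rw [CategoryTheory.Functor.map_id] at this
  exact (Limits.IsZero.iff_id_eq_zero _).2 this

/-- Multiplication by `e * |G|` is the average of `e • id`. -/
theorem map_eq_zero_of_dvd (A : Rep.{0} k G) (c : k) (hc : (Nat.card G : k) ∣ c) (n : ℕ) :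
    (groupCohomology.functor k G (n + 1)).map (c • 𝟙 A) = 0 := by
  obtain ⟨e, rfl⟩ := hc
  refine map_eq_zero_of_average A (e • LinearMap.id) _ (fun a => ?_) n
  have : ∀ g : G, A.ρ g⁻¹ (e • A.ρ g a) = e • a := fun g => by simp
  simp only [LinearMap.smul_apply, LinearMap.id_apply, this, Rep.smul_hom]
  change _ = ((Nat.card G : k) * e) • a
  rw [mul_smul, Nat.cast_smul_eq_nsmul]
  simp

instance (n : ℕ) : (groupCohomology.functor k G n).Additive :=
  inferInstanceAs (groupCohomology.cochainsFunctor k G ⋙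
    HomologicalComplex.homologyFunctor (ModuleCat k) (.up ℕ) n).Additive

/-- If `A ⟶ B ⟶ A` is multiplication by a scalar congruent to `1` modulo `|G|`, then it is the
identity on positive cohomology, so the positive cohomology of `A` embeds in that of `B`. -/
theorem exists_injective_of_comp {A B : Rep.{0} k G} (F : A ⟶ B) (E : B ⟶ A) (s : k)
    (hs : (Nat.card G : k) ∣ s)
    (h : ∀ a : A.V, E.hom (F.hom a) = (1 + s) • a) (n : ℕ) :
    ∃ f : groupCohomology A (n + 1) →ₗ[k] groupCohomology B (n + 1), Function.Injective f := by
  have hc : F ≫ E = 𝟙 A + s • 𝟙 A :=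
    rep_hom_ext (fun a => by
      simpa [Rep.add_hom, Rep.smul_hom, add_smul] using! h a)
  have h2 : (groupCohomology.functor k G (n + 1)).map F ≫
      (groupCohomology.functor k G (n + 1)).map E = 𝟙 _ := by
    rw [← Functor.map_comp, hc, Functor.map_add, map_eq_zero_of_dvd _ _ hs, add_zero,
      CategoryTheory.Functor.map_id]
  refine ⟨((groupCohomology.functor k G (n + 1)).map F).hom, ?_⟩
  refine Function.LeftInverse.injective (g := ((groupCohomology.functor k G (n + 1)).map E).hom) ?_
  intro x
  exact congr($(h2).hom x)

end Averaging

theorem shortExact_of {G : Type} [Group G] {A B C : Rep.{0} k G} (f : A ⟶ B) (g : B ⟶ C)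
    (w : f ≫ g = 0)
    (hf : Function.Injective f.hom) (hg : Function.Surjective g.hom)
    (hfg : ∀ b, g.hom b = 0 → ∃ a, f.hom a = b) : (ShortComplex.mk f g w).ShortExact where
  exact := by
    rw [← ShortComplex.exact_map_iff_of_faithful _ (forget₂ (Rep.{0} k G) (ModuleCat k)),
      ShortComplex.moduleCat_exact_iff]
    exact hfg
  mono_f := (Rep.mono_iff_injective f).2 hf
  epi_g := (Rep.epi_iff_surjective g).2 hg

/-- Dimension shifting along a short exact sequence with weakly projective middle term. -/
theorem nonempty_equiv_of_shortExact {G : Type} [Group G] [Fintype G]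
    {X : ShortComplex (Rep.{0} k G)}
    (hX : X.ShortExact) (h : IsWeaklyProjective X.X₂) (n : ℕ) :
    Nonempty (groupCohomology X.X₃ (n + 1) ≃ₗ[k] groupCohomology X.X₁ (n + 2)) := by
  have := groupCohomology.isIso_δ_of_isZero hX (n + 1) (h.isZero n) (h.isZero (n + 1))
  exact ⟨(asIso (groupCohomology.δ hX (n + 1) (n + 2) rfl)).toLinearEquiv⟩

/-! ### Cosyzygies and duals -/

section Construction
variable {G : Type} [Group G]

/-- The functions `G → A`, with `G` acting by right translation of the argument only:
`(g f)(h) = f(h g)`. -/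
noncomputable abbrev ambient (A : Rep.{0} k G) : Rep.{0} k G :=
  Rep.of (X := G → A.V) (ρ :=
    { toFun := fun g => LinearMap.funLeft k A.V (· * g)
      map_one' := by ext; simp [LinearMap.funLeft_apply]
      map_mul' := fun g h => by ext; simp [mul_assoc, LinearMap.funLeft_apply] })

/-- The equivariant embedding `a ↦ (h ↦ h a)`. -/
noncomputable def emb (A : Rep.{0} k G) : A ⟶ ambient A :=
  Rep.ofHom
    { toFun := fun a h => A.ρ h a
      map_add' := fun a b => by ext; simp
      map_smul' := fun c a => by ext; simp
      isIntertwining' := fun g => by ext; simp [LinearMap.funLeft_apply] }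

/-- The identity is the average of the projection onto the functions supported at `1`. -/
theorem isWeaklyProjective_ambient [Fintype G] (A : Rep.{0} k G) :
    IsWeaklyProjective (ambient A) := by
  classical
  refine ⟨LinearMap.single k (fun _ : G => A.V) 1 ∘ₗ LinearMap.proj 1, fun f => funext fun h => ?_⟩
  change (∑ g : G, (fun x => (Pi.single 1 (f (1 * g)) : G → A.V) (x * g⁻¹))) h = f h
  rw [Finset.sum_apply, Finset.sum_eq_single h]
  · simp
  · intro b _ hb
    refine Pi.single_eq_of_ne ?_ _
    simpa [mul_inv_eq_one] using hb.symm
  · simp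

/-- The cokernel of `emb A`. -/
noncomputable abbrev cosyzygy (A : Rep.{0} k G) : Rep.{0} k G :=
  (ambient A).quotient (LinearMap.range (emb A).hom.toLinearMap) (by
    rintro g _ ⟨a, rfl⟩
    exact ⟨A.ρ g a, Rep.hom_comm_apply (emb A) g a⟩)

/-- The quotient map onto the cosyzygy. -/
noncomputable def proj (A : Rep.{0} k G) : ambient A ⟶ cosyzygy A :=
  (ambient A).mkQ _ _

theorem proj_surjective (A : Rep.{0} k G) : Function.Surjective (proj A).hom :=
  Submodule.mkQ_surjective _

theorem emb_injective (A : Rep.{0} k G) : Function.Injective (emb A).hom := fun a b h => by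
  have := congrFun h 1
  change A.ρ 1 a = A.ρ 1 b at this
  simpa using this

theorem proj_eq_zero_iff (A : Rep.{0} k G) (x : G → A.V) :
    (proj A).hom x = 0 ↔ ∃ a, (emb A).hom a = x :=
  Submodule.Quotient.mk_eq_zero _

theorem emb_comp_proj (A : Rep.{0} k G) : emb A ≫ proj A = 0 :=
  rep_hom_ext fun a => (proj_eq_zero_iff A _).2 ⟨a, rfl⟩

theorem shortExact_cosyzygy (A : Rep.{0} k G) :
    (ShortComplex.mk (emb A) (proj A) (emb_comp_proj A)).ShortExact :=
  shortExact_of _ _ _ (emb_injective A) (proj_surjective A) fun b => (proj_eq_zero_iff A b).1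

/-- The `k`-linear dual with the contragredient action. -/
noncomputable abbrev dual (A : Rep.{0} k G) : Rep.{0} k G := Rep.of A.ρ.dual

/-- The transpose of a morphism. -/
noncomputable def dualMap {A B : Rep.{0} k G} (f : A ⟶ B) : dual B ⟶ dual A :=
  Rep.ofHom
    { toFun := fun h => h ∘ₗ f.hom.toLinearMap
      map_add' := fun _ _ => rfl
      map_smul' := fun _ _ => rfl
      isIntertwining' := fun g => by
        refine LinearMap.ext fun h => LinearMap.ext fun a => ?_
        exact congrArg h (Rep.hom_comm_apply f g⁻¹ a).symm }

theorem IsWeaklyProjective.dual [Fintype G] {A : Rep.{0} k G} (h : IsWeaklyProjective A) :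
    IsWeaklyProjective (dual A) := by
  obtain ⟨φ, hφ⟩ := h
  refine ⟨φ.dualMap, fun f => LinearMap.ext fun a => ?_⟩
  refine (LinearMap.sum_apply _ _ _).trans ?_
  change ∑ g : G, f (A.ρ g⁻¹ (φ (A.ρ g⁻¹⁻¹ a))) = f a
  simp only [inv_inv]
  rw [← map_sum, hφ a]
  rfl

/-- Given `φ` averaging to the identity over `G`, the partial average over coset representatives of
`H` in `G` averages to the identity over `H`. -/
theorem IsWeaklyProjective.res [Fintype G] {A : Rep.{0} k G} (h : IsWeaklyProjective A)
    {H : Type} [Group H] [Fintype H] (f : H →* G) (hf : Function.Injective f) :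
    IsWeaklyProjective (Rep.res f A) := by
  classical
  obtain ⟨φ, hφ⟩ := h
  have hbij : Function.Bijective fun p : (G ⧸ f.range) × H => p.1.out * f p.2 := by
    constructor
    · rintro ⟨q, h⟩ ⟨q', h'⟩ heq
      replace heq : q.out * f h = q'.out * f h' := heq
      have h1 : ∀ (q : G ⧸ f.range) (h : H), ((q.out * f h : G) : G ⧸ f.range) = q := fun q h => by
        rw [QuotientGroup.mk_mul_of_mem _ (MonoidHom.mem_range.2 ⟨h, rfl⟩)]; exact q.out_eq'
      have hq : q = q' := by rw [← h1 q h, heq, h1]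
      subst hq
      rw [hf (mul_left_cancel heq)]
    · intro g
      obtain ⟨⟨_, h, rfl⟩, hh⟩ := QuotientGroup.mk_out_eq_mul f.range g
      exact ⟨(g, h⁻¹), by simp [hh]⟩
  let t : G ⧸ f.range → G := fun q => q.out
  -- Every element of `G` is uniquely `t q * f h`.
  let e : (G ⧸ f.range) × H ≃ G := Equiv.ofBijective (fun p => t p.1 * f p.2) hbij
  refine ⟨∑ q, A.ρ (t q)⁻¹ ∘ₗ φ ∘ₗ A.ρ (t q), fun a => ?_⟩
  rw [← hφ a, ← e.sum_comp, Fintype.sum_prod_type_right]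
  refine Finset.sum_congr rfl fun h _ => ?_
  change A.ρ (f h⁻¹) ((∑ q, A.ρ (t q)⁻¹ ∘ₗ φ ∘ₗ A.ρ (t q)) (A.ρ (f h) a)) = _
  rw [LinearMap.sum_apply, map_sum]
  refine Finset.sum_congr rfl fun q _ => ?_
  simp [e]

/-- The dual of the cosyzygy sequence is exact because `emb A` has a `k`-linear retraction,
evaluation at `1`. -/
theorem shortExact_dual (A : Rep.{0} k G) :
    (ShortComplex.mk (dualMap (proj A)) (dualMap (emb A)) (by
      refine rep_hom_ext fun h => LinearMap.ext fun a => ?_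
      change h ((emb A ≫ proj A).hom a) = 0
      rw [emb_comp_proj]; exact map_zero h)).ShortExact := by
  refine shortExact_of _ _ _ ?_ ?_ ?_
  · intro x y h
    refine LinearMap.ext fun b => ?_
    obtain ⟨c, rfl⟩ := proj_surjective A b
    exact congr($h c)
  · intro x
    refine ⟨x ∘ₗ LinearMap.proj 1, LinearMap.ext fun a => ?_⟩
    change x (A.ρ 1 a) = x a
    simp
  · intro x hx
    refine ⟨Submodule.liftQ _ x ?_, LinearMap.ext fun a => ?_⟩
    · rintro _ ⟨a, rfl⟩
      exact congr($hx a)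
    · rfl

theorem finite_cosyzygy [Finite G] (A : Rep.{0} k G) [Module.Finite k A.V] :
    Module.Finite k (cosyzygy A).V :=
  Module.Finite.of_surjective (proj A).hom.toLinearMap (proj_surjective A)

/-- Evaluation at `1` splits `emb A` over `k`, so the cosyzygy is a `k`-linear direct summand of
`G → A`. -/
theorem projective_cosyzygy [Finite G] (A : Rep.{0} k G) [Module.Free k A.V] :
    Module.Projective k (cosyzygy A).V := by
  let r : (G → A.V) →ₗ[k] (G → A.V) :=
    LinearMap.id - (emb A).hom.toLinearMap ∘ₗ LinearMap.proj 1
  refine Module.Projective.of_split (P := (cosyzygy A).V) (M := G → A.V)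
    (Submodule.liftQ _ r ?_) (proj A).hom.toLinearMap ?_
  · rintro _ ⟨a, rfl⟩
    change (emb A).hom a - (emb A).hom (A.ρ 1 a) = 0
    simp
  · refine LinearMap.ext fun b => ?_
    obtain ⟨c, rfl⟩ := proj_surjective A b
    change (proj A).hom (c - (emb A).hom (c 1)) = (proj A).hom c
    rw [map_sub, (proj_eq_zero_iff A _).2 ⟨c 1, rfl⟩, sub_zero]

theorem free_cosyzygy [Finite G] [IsDomain k] [IsPrincipalIdealRing k] (A : Rep.{0} k G)
    [Module.Free k A.V] [Module.Finite k A.V] : Module.Free k (cosyzygy A).V := by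
  have := finite_cosyzygy A
  have := projective_cosyzygy A
  infer_instance

end Construction

/-! ### Dimension shifting -/

section Syzygies
variable (G : Type) [Group G]

variable (k) in
/-- The `n`-th iterated cosyzygy of the trivial module. -/
noncomputable def syz : ℕ → Rep.{0} k G
  | 0 => Rep.trivial k G k
  | n + 1 => cosyzygy (syz n)

variable {G}

theorem syz_finite_free [Finite G] [IsDomain k] [IsPrincipalIdealRing k] (n : ℕ) :
    Module.Finite k (syz k G n).V ∧ Module.Free k (syz k G n).V := by
  induction n with
  | zero => exact ⟨inferInstanceAs (Module.Finite k k), inferInstanceAs (Module.Free k k)⟩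
  | succ n ih =>
    obtain ⟨h1, h2⟩ := ih
    exact ⟨finite_cosyzygy _, free_cosyzygy _⟩

theorem res_trivial {H : Type} [Group H] (f : H →* G) :
    Rep.res f (Rep.trivial k G k) = Rep.trivial k H k := rfl

/-- `H^i(H; syz n) ≅ H^{i+n}(H; k)` for `i > 0`, for every subgroup `f : H → G`. -/
theorem syz_res [Fintype G] {H : Type} [Group H] [Fintype H] (f : H →* G)
    (hf : Function.Injective f) (n i : ℕ) :
    Nonempty (groupCohomology (Rep.res f (syz k G n)) (i + 1) ≃ₗ[k]
      groupCohomology (Rep.trivial k H k) (i + 1 + n)) := by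
  induction n generalizing i with
  | zero => exact ⟨LinearEquiv.refl _ _⟩
  | succ n ih =>
    obtain ⟨e⟩ := nonempty_equiv_of_shortExact
      ((Rep.shortExact_res f).2 (shortExact_cosyzygy (syz k G n)))
      ((isWeaklyProjective_ambient (syz k G n)).res f hf) i
    obtain ⟨e'⟩ := ih (i + 1)
    rw [show i + 1 + (n + 1) = i + 1 + 1 + n by omega]
    exact ⟨e.trans e'⟩

theorem dual_trivial_iso : Nonempty (dual (Rep.trivial k G k) ≅ Rep.trivial k G k) := by
  refine ⟨⟨Rep.ofHom ⟨LinearMap.applyₗ (1 : k), fun g => ?_⟩,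
    Rep.ofHom ⟨LinearMap.toSpanSingleton k (Module.Dual k k) LinearMap.id, fun g => ?_⟩, ?_, ?_⟩⟩
  · rfl
  · rfl
  · refine rep_hom_ext fun a => ?_
    refine LinearMap.ext_ring ?_
    change a 1 • (1 : k) = a 1
    simp
  · refine rep_hom_ext fun a => ?_
    change a • (1 : k) = a
    simp

/-- `H^{i+n}(G; (syz n)*) ≅ H^i(G; k)` for `i > 0`. -/
theorem syz_dual [Fintype G] (n i : ℕ) :
    Nonempty (groupCohomology (dual (syz k G n)) (i + n + 1) ≃ₗ[k]
      groupCohomology (Rep.trivial k G k) (i + 1)) := by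
  induction n with
  | zero =>
    obtain ⟨e⟩ := dual_trivial_iso (k := k) (G := G)
    exact ⟨((groupCohomology.functor k G (i + 1)).mapIso e).toLinearEquiv⟩
  | succ n ih =>
    obtain ⟨e⟩ := nonempty_equiv_of_shortExact (shortExact_dual (syz k G n))
      (isWeaklyProjective_ambient (syz k G n)).dual (i + n)
    obtain ⟨e'⟩ := ih
    exact ⟨e.symm.trans e'⟩

end Syzygies
/-! ### Duality for lattices -/

section Duality

/-- Nondegeneracy of the pairing of Tate cohomology groups in degree zero of a lattice `B` and its
dual: if the invariant `b` has order exactly `|G|` modulo norms, then some invariant functional `h`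
satisfies `h b ≡ 1` modulo `|G|`.

Let `d` generate the ideal of the values `h b` and of `|G| = d e`. The functional `h ↦ h b / d` on
the invariants of the dual extends to the whole dual, hence is evaluation at some `x ∈ B`. Then
`e • b` is the norm of `x`, so `|G| ∣ e` and `d` is a unit. -/
theorem exists_invariant_dual {G : Type} [Group G] [Fintype G] [IsDomain k]
    [IsPrincipalIdealRing k] (B : Rep.{0} k G) [Module.Free k B.V] [Module.Finite k B.V]
    (hG : (Nat.card G : k) ≠ 0) (b : B.V) (hbG : ∀ g, B.ρ g b = b)
    (hb : ∀ (t : k) (x : B.V), ∑ g, B.ρ g x = t • b → (Nat.card G : k) ∣ t) :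
    ∃ h : Module.Dual k B.V, (∀ g a, h (B.ρ g a) = h a) ∧
      ∃ s : k, (Nat.card G : k) ∣ s ∧ h b = 1 + s := by
  let I : Submodule k (Module.Dual k B.V) :=
    { carrier := {h | ∀ g a, h (B.ρ g a) = h a}
      add_mem' := fun {x y} hx hy g a => by simp [hx g a, hy g a]
      zero_mem' := fun g a => rfl
      smul_mem' := fun c x hx g a => by simp [hx g a] }
  let S : Ideal k := I.map (LinearMap.applyₗ b)
  obtain ⟨d, hd⟩ := (IsPrincipalIdealRing.principal (S ⊔ Ideal.span {(Nat.card G : k)})).principal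
  obtain ⟨e, he⟩ : d ∣ (Nat.card G : k) := by
    rw [← Ideal.mem_span_singleton, Ideal.span, ← hd]
    exact Ideal.mem_sup_right (Ideal.mem_span_singleton_self _)
  have hd0 : d ≠ 0 := fun h => hG (by rw [he, h, zero_mul])
  have he0 : e ≠ 0 := fun h => hG (by rw [he, h, mul_zero])
  have : Module.IsTorsionFree k (Module.Dual k B.V ⧸ I) := by
    refine .of_smul_eq_zero fun c q hq => ?_
    obtain ⟨h, rfl⟩ := I.mkQ_surjective q
    rw [or_iff_not_imp_left]
    intro hc
    rw [← map_smul, Submodule.mkQ_apply, Submodule.Quotient.mk_eq_zero] at hq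
    rw [Submodule.mkQ_apply, Submodule.Quotient.mk_eq_zero]
    exact fun g a => mul_left_cancel₀ hc (hq g a)
  -- The invariants of the dual have torsion-free quotient, so they are a direct summand; `r` is the
  -- projection onto them.
  obtain ⟨σ, hσ⟩ := Module.projective_lifting_property I.mkQ LinearMap.id I.mkQ_surjective
  let r : Module.Dual k B.V →ₗ[k] Module.Dual k B.V := LinearMap.id - σ ∘ₗ I.mkQ
  have hr : ∀ h, r h ∈ I := fun h => by
    have := congr($hσ (I.mkQ h))
    simp only [LinearMap.comp_apply, LinearMap.id_apply] at this
    rw [← Submodule.Quotient.mk_eq_zero]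
    change I.mkQ (h - σ (I.mkQ h)) = 0
    rw [map_sub, this, sub_self]
  have hr' : ∀ h ∈ I, r h = h := fun h hh => by
    simp [r, (Submodule.Quotient.mk_eq_zero I).2 hh]
  have hdvd : ∀ h, ∃ c, (r h) b = d * c := fun h => by
    change d ∣ _
    rw [← Ideal.mem_span_singleton, Ideal.span, ← hd]
    exact Ideal.mem_sup_left ⟨r h, hr h, rfl⟩
  choose c hc using hdvd
  -- The functional `h ↦ (r h) b / d` on the dual, which is evaluation at `x` by reflexivity.
  let w : Module.Dual k (Module.Dual k B.V) :=
    { toFun := c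
      map_add' := fun x y => mul_left_cancel₀ hd0 (by rw [mul_add, ← hc, ← hc, ← hc]; simp)
      map_smul' := fun t x => mul_left_cancel₀ hd0 (by
        rw [← hc, map_smul, LinearMap.smul_apply, hc]; simp [mul_left_comm]) }
  obtain ⟨x, hx⟩ := (Module.evalEquiv k B.V).surjective w
  replace hx : ∀ h : Module.Dual k B.V, h x = c h := fun h => congr($hx h)
  have hNx : ∑ g, B.ρ g x = e • b := by
    refine Module.eval_apply_injective k (LinearMap.ext fun h => ?_)
    change h (∑ g, B.ρ g x) = h (e • b)
    let Nh : Module.Dual k B.V := ∑ g, h ∘ₗ B.ρ g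
    have hNh : Nh ∈ I := fun g a => by
      simp only [Nh, LinearMap.sum_apply, LinearMap.comp_apply]
      refine Fintype.sum_equiv (Equiv.mulRight g) _ _ fun g' => ?_
      simp
    refine mul_left_cancel₀ hd0 ?_
    calc d * h (∑ g, B.ρ g x) = d * Nh x := by simp [Nh]
      _ = Nh b := by rw [hx, ← hc, hr' _ hNh]
      _ = (Nat.card G : k) * h b := by simp [Nh, hbG]
      _ = d * h (e • b) := by rw [he]; simp [mul_assoc]
  obtain ⟨f, hf⟩ := hb e x hNx
  have hdf : f * d = 1 := mul_left_cancel₀ he0 (by rw [he] at hf; linear_combination -hf)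
  have h1 : (1 : k) ∈ S ⊔ Ideal.span {(Nat.card G : k)} := by
    rw [hd, ← hdf]
    exact Ideal.mul_mem_left _ _ (Ideal.mem_span_singleton_self d)
  obtain ⟨_, ⟨h, hh, rfl⟩, z, hz, hyz⟩ := Submodule.mem_sup.1 h1
  exact ⟨h, hh, -z, (Ideal.mem_span_singleton.1 hz).neg_right, eq_add_neg_of_add_eq hyz⟩

end Duality

/-! ### Periodicity from a period class -/

section Core

variable (k) in
/-- `H^n(G; k)` contains a class annihilated only by the multiples of `|G|`.

For `k = ℤ` the scalar action is the one of `ModuleCat`, rather than integer multiples in the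
underlying additive group. -/
def HasPeriodClass (G : Type) [Group G] (n : ℕ) : Prop :=
  ∃ u : groupCohomology (Rep.trivial k G k) n, ∀ t : k, t • u = 0 → (Nat.card G : k) ∣ t

variable [IsDomain k] [IsPrincipalIdealRing k] {G : Type} [Group G] [Fintype G]

/-- The class in degree `n + 1` is the image of an invariant `b` of `syz (n + 1)` under the connecting
map from `H^0(syz (n + 1))` to `H^1(syz n) ≅ H^{n+1}(k)`. Norms lift to invariants of the middle
term, so they are killed, and `exists_invariant_dual` applies to `b`. -/
theorem exists_pairing (hG : (Nat.card G : k) ≠ 0) (n : ℕ)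
    (hu : HasPeriodClass k G (n + 1)) :
    ∃ (b : (syz k G (n + 1)).V) (h : Module.Dual k (syz k G (n + 1)).V),
      (∀ g, (syz k G (n + 1)).ρ g b = b) ∧ (∀ g a, h ((syz k G (n + 1)).ρ g a) = h a) ∧
      ∃ s : k, (Nat.card G : k) ∣ s ∧ h b = 1 + s := by
  obtain ⟨u, hu⟩ := hu
  obtain ⟨v, hv⟩ : ∃ v : groupCohomology (syz k G n) 1, ∀ t : k, t • v = 0 → (Nat.card G : k) ∣ t := by
    obtain ⟨e⟩ := syz_res (k := k) (MonoidHom.id G) Function.injective_id n 0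
    rw [show 0 + 1 + n = n + 1 by omega] at e
    refine ⟨e.symm u, fun t ht => hu t ?_⟩
    apply e.symm.injective
    rw [map_smul, map_zero]
    exact ht
  have hX := shortExact_cosyzygy (syz k G n)
  have hepi := groupCohomology.epi_δ_of_isZero hX 0
    ((isWeaklyProjective_ambient (syz k G n)).isZero 0)
  obtain ⟨z, hz⟩ := (ModuleCat.epi_iff_surjective _).1 hepi v
  let B := cosyzygy (syz k G n)
  let b : B.ρ.invariants := (groupCohomology.H0Iso B).hom z
  have hb : groupCohomology.δ hX 0 1 rfl ((groupCohomology.H0Iso B).inv b) = v := by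
    rw [← hz]; simp [b, B]
  obtain ⟨_, _⟩ := syz_finite_free (k := k) (G := G) (n + 1)
  obtain ⟨h, hh, s, hs⟩ := exists_invariant_dual (syz k G (n + 1)) hG b.1 b.2 (fun t x hx => by
    apply hv
    obtain ⟨c, hc⟩ := proj_surjective _ x
    let y := ∑ g, (ambient (syz k G n)).ρ g c
    have hy : (proj (syz k G n)).hom y = (t • b : B.ρ.invariants).1 := by
      refine Eq.trans ?_ hx
      rw [map_sum]
      refine Finset.sum_congr rfl fun g _ => ?_
      rw [← hc]
      exact Rep.hom_comm_apply (proj (syz k G n)) g c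
    -- The lift `y` of `t • b` is invariant, so `0` is a cocycle representing its image.
    have h0 := groupCohomology.δ₀_apply hX (t • b) y hy 0 (by
      funext g
      change (emb (syz k G n)).hom 0 = (ambient (syz k G n)).ρ g y - y
      rw [map_zero, eq_comm, sub_eq_zero, map_sum]
      refine Fintype.sum_equiv (Equiv.mulLeft g) _ _ fun g' => ?_
      rw [Equiv.coe_mulLeft, map_mul, Module.End.mul_apply])
    rw [map_smul, map_smul, hb] at h0
    rw [h0]
    exact map_zero (groupCohomology.H1π (syz k G n)).hom)
  exact ⟨b.1, h, b.2, hh, s, hs⟩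

/-- A period class of `G` in degree `n + 1` shifts the cohomology of each subgroup `H` up by `n + 1`. -/
theorem exists_injective_add (hG : (Nat.card G : k) ≠ 0) (n : ℕ)
    (hu : HasPeriodClass k G (n + 1))
    {H : Type} [Group H] [Fintype H] (f : H →* G) (hf : Function.Injective f) (i : ℕ) :
    ∃ φ : groupCohomology (Rep.trivial k H k) (i + 1) →ₗ[k]
      groupCohomology (Rep.trivial k H k) (i + 1 + (n + 1)), Function.Injective φ := by
  obtain ⟨b, h, hb, hh, s, hs, hbs⟩ := exists_pairing hG n hu
  let B := Rep.res f (syz k G (n + 1))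
  let F : Rep.trivial k H k ⟶ B := Rep.ofHom
    ⟨LinearMap.toSpanSingleton k B.V b, fun g => LinearMap.ext_ring <| by
      change (1 : k) • b = (syz k G (n + 1)).ρ (f g) ((1 : k) • b)
      rw [one_smul, hb]⟩
  let E : B ⟶ Rep.trivial k H k := Rep.ofHom ⟨h, fun g => LinearMap.ext fun a => hh (f g) a⟩
  have hcard : (Nat.card H : k) ∣ s :=
    (Nat.cast_dvd_cast (Subgroup.card_dvd_of_injective f hf)).trans hs
  obtain ⟨φ, hφ⟩ := exists_injective_of_comp F E s hcard (fun a => by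
    change h (a • b) = (1 + s) * a
    rw [map_smul, hbs, smul_eq_mul, mul_comm]) i
  obtain ⟨e⟩ := syz_res (k := k) f hf (n + 1) i
  exact ⟨e.toLinearMap ∘ₗ φ, e.injective.comp hφ⟩

/-- A period class in degree `n + 1` shifts the cohomology of `G` down by `n + 1`; the dual of
`syz (n + 1)` replaces `syz (n + 1)`. -/
theorem exists_injective_sub (hG : (Nat.card G : k) ≠ 0) (n : ℕ)
    (hu : HasPeriodClass k G (n + 1)) (i : ℕ) :
    ∃ φ : groupCohomology (Rep.trivial k G k) (i + (n + 1) + 1) →ₗ[k]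
      groupCohomology (Rep.trivial k G k) (i + 1), Function.Injective φ := by
  obtain ⟨b, h, hb, hh, s, hs, hbs⟩ := exists_pairing hG n hu
  let B := dual (syz k G (n + 1))
  let F : Rep.trivial k G k ⟶ B := Rep.ofHom
    ⟨LinearMap.toSpanSingleton k B.V h, fun g => LinearMap.ext_ring <| LinearMap.ext fun a => by
      change (1 : k) • h a = ((1 : k) • h) ((syz k G (n + 1)).ρ g⁻¹ a)
      rw [LinearMap.smul_apply, hh]⟩
  let E : B ⟶ Rep.trivial k G k := Rep.ofHom
    ⟨LinearMap.applyₗ b, fun g => LinearMap.ext fun (a : Module.Dual k _) => by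
      change a ((syz k G (n + 1)).ρ g⁻¹ b) = a b
      rw [hb]⟩
  obtain ⟨φ, hφ⟩ := exists_injective_of_comp F E s hs (fun a => by
    change a * h b = (1 + s) * a
    rw [hbs, mul_comm]) (i + (n + 1))
  obtain ⟨e⟩ := syz_dual (k := k) (G := G) (n + 1) i
  exact ⟨e.toLinearMap ∘ₗ φ, e.injective.comp hφ⟩

end Core

/-! ### Periods -/

section Final

theorem hasPeriodClass {G : Type} [Group G] [Finite G] {n : ℕ} (h : IsCohomologyPeriod G n) :
    HasPeriodClass ℤ G n := by
  obtain ⟨_, ⟨e⟩⟩ := h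
  refine ⟨e.symm 1, fun t ht => ?_⟩
  -- The module structure on cohomology is not syntactically that of integer multiples.
  have ht' : t • e.symm 1 = 0 := (int_smul_eq_zsmul _ t _).symm.trans ht
  rw [← map_zsmul, map_eq_zero_iff _ e.symm.injective] at ht'
  rw [← ZMod.intCast_zmod_eq_zero_iff_dvd]
  simpa using ht'

theorem norm_trivial_apply {H : Type} [Group H] [Fintype H] (a : ℤ) :
    (Rep.trivial ℤ H ℤ).norm.hom a = (Nat.card H : ℤ) * a := by
  change (∑ g : H, (Rep.trivial ℤ H ℤ).ρ g) a = _
  rw [LinearMap.sum_apply]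
  change ∑ g : H, a = _
  simp

theorem subsingleton_of_odd {H : Type} [CommGroup H] [Fintype H] (g : H)
    (hg : ∀ x, x ∈ Subgroup.zpowers g) (i : ℕ) (hi : Odd i) :
    Subsingleton (groupCohomology (Rep.trivial ℤ H ℤ) i) := by
  classical
  let A := Rep.trivial ℤ H ℤ
  have : Epi (Rep.FiniteCyclicGroup.groupCohomologyπOdd A g hg i hi) := by
    have := epi_comp (ShortComplex.homologyπ (Rep.FiniteCyclicGroup.subCompNormHom A g))
      (Rep.FiniteCyclicGroup.groupCohomologyIsoOdd A g hg i hi).inv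
    have h3 : Epi (ShortComplex.moduleCatCyclesIso (Rep.FiniteCyclicGroup.subCompNormHom A g)).inv :=
      IsIso.epi_of_iso _
    exact @epi_comp _ _ _ _ _ _ h3 _ this
  have hs := (ModuleCat.epi_iff_surjective _).1 this
  have : Subsingleton (ModuleCat.of ℤ (LinearMap.ker A.norm.hom.toLinearMap)) := by
    refine ⟨fun x y => Subtype.ext ?_⟩
    have key : ∀ x : LinearMap.ker A.norm.hom.toLinearMap, x.1 = (0 : ℤ) := fun x => by
      have h := (norm_trivial_apply x.1).symm.trans (LinearMap.mem_ker.1 x.2)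
      exact (mul_eq_zero.1 h).resolve_left (Nat.cast_ne_zero.2 Nat.card_pos.ne')
    rw [key x, key y]
  exact hs.subsingleton

theorem nontrivial_of_even {H : Type} [CommGroup H] [Fintype H] [Nontrivial H] (g : H)
    (hg : ∀ x, x ∈ Subgroup.zpowers g) :
    Nontrivial (groupCohomology (Rep.trivial ℤ H ℤ) 2) := by
  classical
  let A := Rep.trivial ℤ H ℤ
  let x : LinearMap.ker (Rep.applyAsHom A g - 𝟙 A).hom.toLinearMap := ⟨(1 : ℤ), sub_self (1 : ℤ)⟩
  refine ⟨Rep.FiniteCyclicGroup.groupCohomologyπEven A g hg 2 (by decide) x, 0, fun h => ?_⟩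
  rw [Rep.FiniteCyclicGroup.groupCohomologyπEven_eq_zero_iff] at h
  obtain ⟨a, ha⟩ := h
  have h1 : (Nat.card H : ℤ) * (a : ℤ) = 1 := (norm_trivial_apply a).symm.trans ha
  have h2 : Nat.card H = 1 := by
    have := Int.isUnit_iff.1 (IsUnit.of_mul_eq_one _ h1)
    omega
  exact Finite.one_lt_card.ne' h2

theorem exists_cyclic_subgroup (G : Type) [Group G] [Nontrivial G] :
    ∃ (H : Type) (_ : CommGroup H) (_ : Nontrivial H) (f : H →* G) (g : H),
      Function.Injective f ∧ ∀ y, y ∈ Subgroup.zpowers g := by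
  obtain ⟨x, hx⟩ := exists_ne (1 : G)
  refine ⟨Subgroup.zpowers x, { (inferInstance : Group (Subgroup.zpowers x)) with
      mul_comm := mul_comm' },
    (Subgroup.nontrivial_iff_ne_bot _).2 (by simpa using hx), (Subgroup.zpowers x).subtype,
    ⟨x, Subgroup.mem_zpowers x⟩, (Subgroup.zpowers x).subtype_injective, ?_⟩
  rintro ⟨_, m, rfl⟩
  exact ⟨m, Subtype.ext rfl⟩

theorem even_of_isCohomologyPeriod {G : Type} [Group G] [Finite G] [Nontrivial G] {d : ℕ}
    (hd : IsCohomologyPeriod G d) : Even d := by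
  classical
  have := Fintype.ofFinite G
  have hu := hasPeriodClass hd
  obtain ⟨n, rfl⟩ := Nat.exists_eq_succ_of_ne_zero hd.1.ne'
  obtain ⟨H, _, _, f, g, hf, hg⟩ := exists_cyclic_subgroup G
  have := Fintype.ofInjective f hf
  by_contra hodd
  obtain ⟨φ, hφ⟩ := exists_injective_add (k := ℤ) (by exact_mod_cast Nat.card_pos.ne') n hu
    f hf 1
  have h1 := subsingleton_of_odd g hg (1 + 1 + (n + 1)) (by
    rw [Nat.not_even_iff_odd] at hodd
    exact Even.add_odd (by decide) hodd)
  have h2 := nontrivial_of_even g hg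
  exact not_subsingleton _ (hφ.subsingleton)

theorem isCohomologyPeriod_sub {G : Type} [Group G] [Finite G] {n i : ℕ}
    (hd : IsCohomologyPeriod G (n + 1)) (h : IsCohomologyPeriod G (i + 1 + (n + 1))) :
    IsCohomologyPeriod G (i + 1) := by
  classical
  have := Fintype.ofFinite G
  have hG : (Nat.card G : ℤ) ≠ 0 := by exact_mod_cast Nat.card_pos.ne'
  have hu := hasPeriodClass hd
  obtain ⟨φ, hφ⟩ := exists_injective_add (k := ℤ) hG n hu (MonoidHom.id G)
    Function.injective_id i
  have hψ := exists_injective_sub (k := ℤ) hG n hu i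
  rw [show i + (n + 1) + 1 = i + 1 + (n + 1) by omega] at hψ
  obtain ⟨ψ, hψ⟩ := hψ
  obtain ⟨_, ⟨e⟩⟩ := h
  have : NeZero (Nat.card G) := ⟨Nat.card_pos.ne'⟩
  have : Finite (groupCohomology (Rep.trivial ℤ G ℤ) (i + 1 + (n + 1))) :=
    Finite.of_equiv _ e.symm.toEquiv
  have : Finite (groupCohomology (Rep.trivial ℤ G ℤ) (i + 1)) := Finite.of_injective φ hφ
  have hbij : Function.Bijective φ := by
    refine (Nat.bijective_iff_injective_and_card _).2 ⟨hφ, le_antisymm ?_ ?_⟩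
    · exact Nat.card_le_card_of_injective φ hφ
    · exact Nat.card_le_card_of_injective ψ hψ
  exact ⟨i.succ_pos, ⟨(AddEquiv.ofBijective φ hbij).trans e⟩⟩

end Final

end PeriodicCohomology

/-- For a nontrivial finite group with periodic cohomology, the set of periods is
nonempty, its minimal element is even, and every period is a multiple of the minimal
period. -/
theorem periods_of_periodic_group (G : Type) [Group G] [Finite G] [Nontrivial G]
    (hper : ∃ n : ℕ, IsCohomologyPeriod G n) :
    {n : ℕ | IsCohomologyPeriod G n}.Nonempty ∧
      Even (sInf {n : ℕ | IsCohomologyPeriod G n}) ∧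
      ∀ n ∈ {n : ℕ | IsCohomologyPeriod G n}, sInf {n : ℕ | IsCohomologyPeriod G n} ∣ n := by
  have hne : {n : ℕ | IsCohomologyPeriod G n}.Nonempty := hper
  have hd := Nat.sInf_mem hne
  refine ⟨hne, PeriodicCohomology.even_of_isCohomologyPeriod hd, fun n => ?_⟩
  induction n using Nat.strong_induction_on with
  | _ n ih =>
    intro hn
    have hle := Nat.sInf_le hn
    generalize hd' : sInf {n : ℕ | IsCohomologyPeriod G n} = d at *
    rcases hle.eq_or_lt with rfl | hlt
    · rfl
    have hd0 : 0 < d := hd.1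
    obtain ⟨m, rfl⟩ : ∃ m, d = m + 1 := ⟨d - 1, by omega⟩
    obtain ⟨i, rfl⟩ : ∃ i, n = i + 1 + (m + 1) := ⟨n - m - 2, by omega⟩
    exact (ih (i + 1) (by omega) (PeriodicCohomology.isCohomologyPeriod_sub hd hn)).add dvd_rfl
end
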